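/- arXiv:quant-ph/0406196 — 4 statements merged into one kernel-verified Lean document; each statement's English description precedes it below -/
import Mathlib

section
/- The number of n-qubit pure stabilizer states equals 2^n · ∏_{k=0}^{n-1} (2^{n-k} + 1). Precisely: the number of one-dimensional subspaces W of ℂ^(2^n) such that the set of P ∈ P_n with Pψ = ψ for every ψ ∈ W has cardinality exactly 2^n, equals 2^n · ∏_{k=0}^{n-1} (2^{n-k} + 1). -/
open Matrix

noncomputable section

/-- The space of `n`-qubit operators: `2^n × 2^n` complex matrices, with rows and
columns indexed by bit strings of length `n`. -/
abbrev QMat (n : ℕ) := Matrix (Fin n → Fin 2) (Fin n → Fin 2) ℂ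

/-- Pauli X. -/
def pX : Matrix (Fin 2) (Fin 2) ℂ := !![0, 1; 1, 0]

/-- Pauli Y. -/
def pY : Matrix (Fin 2) (Fin 2) ℂ := !![0, -Complex.I; Complex.I, 0]

/-- Pauli Z. -/
def pZ : Matrix (Fin 2) (Fin 2) ℂ := !![1, 0; 0, -1]

/-- The Hadamard gate. -/
def hGate : Matrix (Fin 2) (Fin 2) ℂ := (Real.sqrt 2 : ℂ)⁻¹ • !![1, 1; 1, -1]

/-- The phase gate. -/
def phGate : Matrix (Fin 2) (Fin 2) ℂ := !![1, 0; 0, Complex.I]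

/-- Kronecker product of a family of `n` one-qubit matrices. -/
def kron {n : ℕ} (P : Fin n → Matrix (Fin 2) (Fin 2) ℂ) : QMat n :=
  Matrix.of fun x y => ∏ j, P j (x j) (y j)

/-- A one-qubit gate `M` acting on qubit `a`, tensored with identity elsewhere. -/
def onQubit {n : ℕ} (a : Fin n) (M : Matrix (Fin 2) (Fin 2) ℂ) : QMat n :=
  kron fun j => if j = a then M else 1

/-- The CNOT gate with control `a` and target `b`. -/
def cnotGate {n : ℕ} (a b : Fin n) : QMat n :=
  Matrix.of fun x y => if x = Function.update y b (y b + y a) then 1 else 0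

/-- The generating gates of the Clifford group: Hadamard, phase, and CNOT gates. -/
def gateSet (n : ℕ) : Set (QMat n) :=
  {M | (∃ a, M = onQubit a hGate) ∨ (∃ a, M = onQubit a phGate) ∨
       (∃ a b, a ≠ b ∧ M = cnotGate a b)}

/-- The `n`-qubit Clifford group: all products of Hadamard, phase, and CNOT gates
(each generator has finite order, so the generated submonoid is the generated group). -/
def CliffordGroup (n : ℕ) : Submonoid (QMat n) := Submonoid.closure (gateSet n)

/-- The `n`-qubit Pauli group. -/
def PauliGroup (n : ℕ) : Set (QMat n) :=
  {M | ∃ α : ℂ, (α = 1 ∨ α = -1 ∨ α = Complex.I ∨ α = -Complex.I) ∧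
    ∃ P : Fin n → Matrix (Fin 2) (Fin 2) ℂ,
      (∀ j, P j = 1 ∨ P j = pX ∨ P j = pY ∨ P j = pZ) ∧ M = α • kron P}

/-- A Pauli operator with real phase `±1`. -/
def IsRealPauli (n : ℕ) (P : QMat n) : Prop :=
  ∃ ε : ℂ, (ε = 1 ∨ ε = -1) ∧ ∃ Q : Fin n → Matrix (Fin 2) (Fin 2) ℂ,
    (∀ j, Q j = 1 ∨ Q j = pX ∨ Q j = pY ∨ Q j = pZ) ∧ P = ε • kron Q

/-!
By orbit-stabilizer, a line has `2 ^ n` Pauli operators fixing it pointwise iff its nonzero vectors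
have Pauli orbits with `2 ^ (n + 2)` elements, and this turns out to be the least orbit size of a
nonzero vector. Write an `(n + 1)`-qubit vector as a pair `(a, b)` along the first qubit; its orbit
consists of the vectors `(g a, ± g b)` and `(g b, ± g a)`. Hence the least orbit size `m` doubles,
and it is attained exactly at `(a, 0)` and `(0, a)` for `a` of least orbit size, and at `(a, b)`
with moreover `b` in the orbit of `a`. So every line of least orbit size for `n` qubits gives
`m + 2 = 2 * (2 ^ (n + 1) + 1)` such lines for `n + 1` qubits.
-/

open MulAction
open scoped LinearAlgebra.Projectivization

theorem units_smul_left_injective {V : Type*} [AddCommGroup V] [IsAddTorsionFree V] {v : V}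
    (hv : v ≠ 0) : Function.Injective fun ε : ℤˣ => ε • v :=
  fun _ _ h => Units.ext (smul_left_injective ℤ hv h)

/-- An action of a group on an additive group in which the signs `±1` act through group elements
and every element squares to a sign. The Pauli group acts on vectors in this way; the sign is
encoded as a unit of `ℤ`. -/
structure IsPauliAction (G V : Type*) [Group G] [AddCommGroup V] [DistribMulAction G V] :
    Prop where
  exists_smul_eq_sign_smul : ∀ ε : ℤˣ, ∃ g : G, ∀ v : V, g • v = ε • v
  exists_smul_smul_eq_sign_smul : ∀ g : G, ∃ ε : ℤˣ, ∀ v : V, g • g • v = ε • v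

namespace IsPauliAction

variable {G V : Type*} [Group G] [AddCommGroup V] [DistribMulAction G V]

theorem sign_smul_mem_orbit (hG : IsPauliAction G V) (ε : ℤˣ) {v w : V} (hw : w ∈ orbit G v) :
    ε • w ∈ orbit G v := by
  obtain ⟨g, hg⟩ := hG.exists_smul_eq_sign_smul ε
  exact hg w ▸ mem_orbit_of_mem_orbit g hw

theorem exists_smul_smul_eq_sign_smul_comm (hG : IsPauliAction G V) (g h : G) :
    ∃ ε : ℤˣ, ∀ v : V, g • h • v = ε • h • g • v := by
  obtain ⟨α, hα⟩ := hG.exists_smul_smul_eq_sign_smul g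
  obtain ⟨β, hβ⟩ := hG.exists_smul_smul_eq_sign_smul h
  obtain ⟨γ, hγ⟩ := hG.exists_smul_smul_eq_sign_smul (g * h)
  refine ⟨γ * (α * β), fun v => ?_⟩
  have square_apply : g • h • g • h • h • g • v = γ • h • g • v := by
    simpa only [mul_smul] using hγ (h • g • v)
  have cancel_squares : g • h • g • h • h • g • v = (α * β) • g • h • v := by
    rw [hβ, smul_comm g β, hα, mul_comm, mul_smul]
    simp only [smul_comm (M := G) (N := ℤˣ)]
  rw [mul_comm, mul_smul, ← square_apply, cancel_squares, smul_smul (M := ℤˣ),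
    Int.units_mul_self, one_smul]

end IsPauliAction

/-- `H` acts on the sum `V × V`, identified with `W` through `e`, by the operators of `G` on each
summand composed with the one-qubit Pauli operators on the pair of summands. For Pauli groups this
is the passage from `n` to `n + 1` qubits. -/
structure IsDoubling (G H : Type*) {V W : Type*} [Group G] [AddCommGroup V] [DistribMulAction G V]
    [Group H] [AddCommGroup W] [DistribMulAction H W] (e : V × V ≃+ W) : Prop where
  exists_smul_eq : ∀ h : H, ∃ (g : G) (ε : ℤˣ), (∀ a b, h • e (a, b) = e (g • a, ε • g • b)) ∨
    ∀ a b, h • e (a, b) = e (g • b, ε • g • a)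
  exists_diagonal : ∀ (g : G) (ε : ℤˣ), ∃ h : H, ∀ a b, h • e (a, b) = e (g • a, ε • g • b)
  exists_antidiagonal : ∀ (g : G) (ε : ℤˣ), ∃ h : H, ∀ a b, h • e (a, b) = e (g • b, ε • g • a)

namespace IsDoubling

section Orbit

variable {G H V W : Type*} [Group G] [AddCommGroup V] [DistribMulAction G V]
  [Group H] [AddCommGroup W] [DistribMulAction H W] {e : V × V ≃+ W} {a b : V}

theorem mem_orbit_iff (hH : IsDoubling G H e) {w : W} :
    w ∈ orbit H (e (a, b)) ↔
      ∃ (g : G) (ε : ℤˣ), w = e (g • a, ε • g • b) ∨ w = e (g • b, ε • g • a) := by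
  constructor
  · rintro ⟨h, rfl⟩
    obtain ⟨g, ε, hg | hg⟩ := hH.exists_smul_eq h
    · exact ⟨g, ε, .inl (hg a b)⟩
    · exact ⟨g, ε, .inr (hg a b)⟩
  · rintro ⟨g, ε, rfl | rfl⟩
    · obtain ⟨h, hh⟩ := hH.exists_diagonal g ε
      exact ⟨h, hh a b⟩
    · obtain ⟨h, hh⟩ := hH.exists_antidiagonal g ε
      exact ⟨h, hh a b⟩

theorem orbit_swap (hH : IsDoubling G H e) (a b : V) :
    orbit H (e (b, a)) = orbit H (e (a, b)) := by
  ext w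
  simp only [hH.mem_orbit_iff, or_comm]

theorem ncard_orbit_left [Finite G] (hG : IsPauliAction G V) (hH : IsDoubling G H e) (ha : a ≠ 0) :
    (orbit H (e (a, 0))).ncard = 2 * (orbit G a).ncard := by
  have orbit_eq : orbit H (e (a, 0)) =
      (fun c => e (c, 0)) '' orbit G a ∪ (fun c => e (0, c)) '' orbit G a := by
    ext w
    simp only [hH.mem_orbit_iff, smul_zero]
    constructor
    · rintro ⟨g, ε, rfl | rfl⟩
      · exact .inl ⟨_, mem_orbit a g, rfl⟩
      · exact .inr ⟨_, hG.sign_smul_mem_orbit ε (mem_orbit a g), rfl⟩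
    · rintro (⟨_, ⟨g, rfl⟩, rfl⟩ | ⟨_, ⟨g, rfl⟩, rfl⟩)
      · exact ⟨g, 1, .inl rfl⟩
      · exact ⟨g, 1, .inr (by simp)⟩
  have disjoint_summands :
      Disjoint ((fun c => e (c, 0)) '' orbit G a) ((fun c => e (0, c)) '' orbit G a) := by
    rw [Set.disjoint_left]
    rintro _ ⟨_, ⟨g, rfl⟩, rfl⟩ ⟨c, -, h⟩
    have : g • a = 0 := (congrArg Prod.fst (e.injective h)).symm
    exact ha ((smul_eq_zero_iff_eq g).1 this)
  have finite_orbit : (orbit G a).Finite := Finite.finite_mulAction_orbit _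
  rw [orbit_eq, Set.ncard_union_eq disjoint_summands (finite_orbit.image _) (finite_orbit.image _),
    Set.ncard_image_of_injective _ fun _ _ h => congrArg Prod.fst (e.injective h),
    Set.ncard_image_of_injective _ fun _ _ h => congrArg Prod.snd (e.injective h), two_mul]

theorem exists_injective_orbit_prod_sign [IsAddTorsionFree V] (hH : IsDoubling G H e)
    (a : V) (hb : b ≠ 0) : ∃ f : orbit G a × ℤˣ → orbit H (e (a, b)),
      Function.Injective f ∧ ∀ x, (e.symm (f x)).1 = x.1 := by
  choose g hg using fun c : orbit G a => c.2
  refine ⟨fun x => ⟨e (x.1, x.2 • g x.1 • b), hH.mem_orbit_iff.2 ⟨g x.1, x.2, .inl ?_⟩⟩, ?_, ?_⟩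
  · rw [← hg x.1]
  · rintro ⟨c, ε⟩ ⟨c', ε'⟩ h
    obtain ⟨hc, hε⟩ := Prod.ext_iff.1 (e.injective (congrArg Subtype.val h))
    obtain rfl : c = c' := Subtype.ext hc
    exact Prod.ext rfl (units_smul_left_injective (smul_ne_zero_iff_ne (g c) |>.2 hb) hε)
  · simp

theorem two_mul_ncard_orbit_le [IsAddTorsionFree V] [Finite H] (hH : IsDoubling G H e)
    (a : V) (hb : b ≠ 0) : 2 * (orbit G a).ncard ≤ (orbit H (e (a, b))).ncard := by
  obtain ⟨f, hf, -⟩ := hH.exists_injective_orbit_prod_sign a hb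
  have : Finite (orbit H (e (a, b))) := Finite.finite_mulAction_orbit _
  simpa [mul_comm] using Nat.card_le_card_of_injective f hf

theorem mem_orbit_of_ncard_orbit_le [IsAddTorsionFree V] [Finite H] (hH : IsDoubling G H e)
    (hb : b ≠ 0) (hab : (orbit H (e (a, b))).ncard ≤ 2 * (orbit G a).ncard) : b ∈ orbit G a := by
  -- The orbit is no larger than the image of `f`, so `f` reaches `e (b, a)`, whose first
  -- coordinate then lies in the orbit of `a`.
  obtain ⟨f, hf, hfst⟩ := hH.exists_injective_orbit_prod_sign a hb
  have : Finite (orbit H (e (a, b))) := Finite.finite_mulAction_orbit _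
  have hf' : Function.Bijective f :=
    hf.bijective_of_nat_card_le (by simpa [mul_comm] using hab)
  obtain ⟨x, hx⟩ := hf'.surjective ⟨e (b, a), hH.orbit_swap a b ▸ mem_orbit_self _⟩
  have hxb : (x.1 : V) = b := by simp [← hfst, hx]
  exact hxb ▸ x.1.2

theorem ncard_orbit_le [Finite G] (hG : IsPauliAction G V) (hH : IsDoubling G H e)
    (hb : b ∈ orbit G a) : (orbit H (e (a, b))).ncard ≤ 2 * (orbit G a).ncard := by
  obtain ⟨q, rfl⟩ := hb
  have subset_graphs : orbit H (e (a, q • a)) ⊆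
      (fun x : V × ℤˣ => e (x.1, x.2 • q • x.1)) '' (orbit G a ×ˢ Set.univ) := by
    intro w hw
    obtain ⟨g, ε, rfl | rfl⟩ := hH.mem_orbit_iff.1 hw
    · obtain ⟨δ, hδ⟩ := hG.exists_smul_smul_eq_sign_smul_comm g q
      exact ⟨(g • a, ε * δ), ⟨mem_orbit a g, trivial⟩, by simp [hδ, mul_smul]⟩
    · obtain ⟨δ, hδ⟩ := hG.exists_smul_smul_eq_sign_smul_comm q g
      obtain ⟨γ, hγ⟩ := hG.exists_smul_smul_eq_sign_smul q
      refine ⟨(g • q • a, ε * (δ * γ)), ⟨mem_orbit_of_mem_orbit g (mem_orbit a q), trivial⟩, ?_⟩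
      simp only [hδ, hγ, smul_comm (M := G) (N := ℤˣ), smul_smul (M := ℤˣ),
        mul_assoc ε, Int.units_mul_self, mul_one]
  have finite_orbit_prod : (orbit G a ×ˢ (Set.univ : Set ℤˣ)).Finite :=
    (Finite.finite_mulAction_orbit _).prod Set.finite_univ
  calc (orbit H (e (a, q • a))).ncard
      ≤ (orbit G a ×ˢ (Set.univ : Set ℤˣ)).ncard :=
        (Set.ncard_le_ncard subset_graphs (finite_orbit_prod.image _)).trans
          (Set.ncard_image_le finite_orbit_prod)
    _ = 2 * (orbit G a).ncard := by simp [Set.ncard_prod, mul_comm]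

end Orbit

section MinimalOrbit

variable {G H V W : Type*} [Group G] [Finite G] [AddCommGroup V] [IsAddTorsionFree V]
  [DistribMulAction G V] [Group H] [Finite H] [AddCommGroup W] [DistribMulAction H W]
  {e : V × V ≃+ W} {m : ℕ}

theorem two_mul_le_ncard_orbit (hG : IsPauliAction G V) (hH : IsDoubling G H e)
    (hm : ∀ v : V, v ≠ 0 → m ≤ (orbit G v).ncard) {w : W} (hw : w ≠ 0) :
    2 * m ≤ (orbit H w).ncard := by
  obtain ⟨⟨a, b⟩, rfl⟩ := e.surjective w
  have hab : a ≠ 0 ∨ b ≠ 0 := by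
    by_contra! h
    exact hw (by rw [h.1, h.2, ← Prod.zero_eq_mk, map_zero])
  rcases eq_or_ne b 0 with rfl | hb
  · have ha := hab.resolve_right (· rfl)
    exact hH.ncard_orbit_left hG ha ▸ Nat.mul_le_mul_left 2 (hm a ha)
  rcases eq_or_ne a 0 with rfl | ha
  · exact hH.orbit_swap b 0 ▸ hH.ncard_orbit_left hG hb ▸ Nat.mul_le_mul_left 2 (hm b hb)
  · exact (Nat.mul_le_mul_left 2 (hm a ha)).trans (hH.two_mul_ncard_orbit_le a hb)

theorem ncard_orbit_eq_two_mul_iff (hG : IsPauliAction G V) (hH : IsDoubling G H e)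
    (hm : ∀ v : V, v ≠ 0 → m ≤ (orbit G v).ncard) {a b : V} (ha : a ≠ 0) (hb : b ≠ 0) :
    (orbit H (e (a, b))).ncard = 2 * m ↔ (orbit G a).ncard = m ∧ b ∈ orbit G a := by
  have hma := hm a ha
  have two_mul_le := hH.two_mul_ncard_orbit_le a hb
  constructor
  · intro hab
    exact ⟨by omega, hH.mem_orbit_of_ncard_orbit_le hb (by omega)⟩
  · rintro ⟨rfl, hba⟩
    exact (hH.ncard_orbit_le hG hba).antisymm two_mul_le

end MinimalOrbit

end IsDoubling

theorem ncard_setOf_mem_and_mem {α β : Type*} {s : Set α} {t : α → Set β} {k : ℕ} (hk : k ≠ 0)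
    (ht : ∀ a ∈ s, (t a).ncard = k) : {x : α × β | x.1 ∈ s ∧ x.2 ∈ t x.1}.ncard = s.ncard * k := by
  have fiberEquiv (a : s) : t a ≃ Fin k :=
    have : Finite (t a) := Set.finite_of_ncard_ne_zero (ht a a.2 ▸ hk)
    Finite.equivFinOfCardEq (ht a a.2)
  let sigmaEquiv : {x : α × β | x.1 ∈ s ∧ x.2 ∈ t x.1} ≃ Σ a : s, t a :=
    { toFun := fun x => ⟨⟨x.1.1, x.2.1⟩, ⟨x.1.2, x.2.2⟩⟩
      invFun := fun x => ⟨(x.1.1, x.2.1), x.1.2, x.2.2⟩ }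
  rw [← Nat.card_coe_set_eq, ← Nat.card_coe_set_eq, Nat.card_congr
    (sigmaEquiv.trans ((Equiv.sigmaCongrRight fiberEquiv).trans (Equiv.sigmaEquivProd s (Fin k))))]
  simp

theorem ncard_orbit_smul {G C X : Type*} [Group G] [Group C] [MulAction G X] [MulAction C X]
    [SMulCommClass G C X] (c : C) (x : X) : (orbit G (c • x)).ncard = (orbit G x).ncard := by
  have : orbit G (c • x) = (c • ·) '' orbit G x := by
    ext y
    simp [mem_orbit_iff, smul_comm _ c]
  rw [this, Set.ncard_image_of_injective _ (MulAction.injective c)]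

section Points

variable {K V : Type*} [DivisionRing K] [AddCommGroup V] [Module K V]

/-- The point of `ℙ K (V × V)` with homogeneous coordinates `[v : c]`, where `v` is the chosen
representative of `p`; the value `none` for `c` encodes the point `[0 : v]`. -/
def slopePoint : ℙ K V × Option V → ℙ K (V × V)
  | (p, none) => .mk K (0, p.rep) fun h => p.rep_nonzero (congrArg Prod.snd h)
  | (p, some c) => .mk K (p.rep, c) fun h => p.rep_nonzero (congrArg Prod.fst h)

theorem eq_and_eq_one_of_smul_rep_eq {p q : ℙ K V} {c : Kˣ} (h : c • q.rep = p.rep) :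
    p = q ∧ c = 1 := by
  obtain rfl : p = q := by
    rw [← p.mk_rep, ← q.mk_rep, Projectivization.mk_eq_mk_iff]
    exact ⟨c, h⟩
  exact ⟨rfl, Units.ext (smul_left_injective K p.rep_nonzero (h.trans (one_smul K _).symm))⟩

theorem map_linearEquiv_bijective {W : Type*} [AddCommGroup W] [Module K W] (e : V ≃ₗ[K] W) :
    Function.Bijective (Projectivization.map (e : V →ₗ[K] W) e.injective) := by
  refine ⟨Projectivization.map_injective _ _, fun q => ?_⟩
  induction q using Projectivization.ind with | _ w hw
  exact ⟨.mk K (e.symm w) (e.symm.map_ne_zero_iff.2 hw), by simp [Projectivization.map_mk]⟩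

theorem card_projectivization_of_finrank_eq_one (h : Module.finrank K V = 1) :
    Nat.card (ℙ K V) = 1 := by
  obtain ⟨v, hv, hspan⟩ := finrank_eq_one_iff'.1 h
  refine Nat.card_eq_one_iff_exists.2 ⟨.mk K v hv, fun p => ?_⟩
  rw [← p.mk_rep, Projectivization.mk_eq_mk_iff']
  exact hspan p.rep

theorem slopePoint_injective : Function.Injective (slopePoint (K := K) (V := V)) := by
  rintro ⟨p, _ | c⟩ ⟨q, _ | d⟩ h <;>
    obtain ⟨k, hk⟩ := (Projectivization.mk_eq_mk_iff K _ _ _ _).1 h <;>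
    obtain ⟨hfst, hsnd⟩ := Prod.ext_iff.1 hk
  · obtain ⟨rfl, -⟩ := eq_and_eq_one_of_smul_rep_eq hsnd
    rfl
  · exact absurd ((smul_eq_zero_iff_eq k).1 hfst) q.rep_nonzero
  · exact absurd (hfst.symm.trans (smul_zero k)) p.rep_nonzero
  · obtain ⟨rfl, rfl⟩ := eq_and_eq_one_of_smul_rep_eq hfst
    exact congrArg (fun x => (p, some x)) (hsnd.symm.trans (one_smul Kˣ d))

theorem slopePoint_surjective : Function.Surjective (slopePoint (K := K) (V := V)) := by
  intro p
  induction p using Projectivization.ind with | _ v hv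
  obtain ⟨a, b⟩ := v
  rcases eq_or_ne a 0 with rfl | ha
  · have hb : b ≠ 0 := fun hb => hv (by rw [hb, Prod.mk_zero_zero])
    obtain ⟨k, hk⟩ := Projectivization.exists_smul_eq_mk_rep K b hb
    exact ⟨(.mk K b hb, none),
      (Projectivization.mk_eq_mk_iff K _ _ _ _).2 ⟨k, by rw [Prod.smul_mk, smul_zero, hk]⟩⟩
  · obtain ⟨k, hk⟩ := Projectivization.exists_smul_eq_mk_rep K a ha
    exact ⟨(.mk K a ha, some (k • b)),
      (Projectivization.mk_eq_mk_iff K _ _ _ _).2 ⟨k, by rw [Prod.smul_mk, hk]⟩⟩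

variable (K) in
/-- The points of `ℙ K V` whose nonzero vectors have a `G`-orbit with exactly `m` elements. The
condition is imposed on the chosen representative only, because the actions considered commute
with scalars. -/
def pointsWithOrbitCard (G V : Type*) [Group G] [AddCommGroup V] [Module K V] [MulAction G V]
    (m : ℕ) : Set (ℙ K V) :=
  {p | (orbit G p.rep).ncard = m}

theorem mk_mem_pointsWithOrbitCard_iff {G : Type*} [Group G] [MulAction G V]
    [SMulCommClass G K V] {m : ℕ} {v : V} (hv : v ≠ 0) :
    Projectivization.mk K v hv ∈ pointsWithOrbitCard K G V m ↔ (orbit G v).ncard = m := by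
  obtain ⟨c, hc⟩ := Projectivization.exists_smul_eq_mk_rep K v hv
  rw [pointsWithOrbitCard, Set.mem_ofPred_eq, ← hc, ncard_orbit_smul]

end Points

namespace IsDoubling

variable {K G H V W : Type*} [DivisionRing K] [Group G] [Finite G] [AddCommGroup V]
  [IsAddTorsionFree V] [Module K V] [DistribMulAction G V] [Group H] [Finite H] [AddCommGroup W]
  [Module K W] [DistribMulAction H W] [SMulCommClass H K W] {e : (V × V) ≃ₗ[K] W} {m : ℕ}

theorem map_slopePoint_mem_iff (hG : IsPauliAction G V) (hH : IsDoubling G H (e : V × V ≃+ W))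
    (hm : ∀ v : V, v ≠ 0 → m ≤ (orbit G v).ncard) (p : ℙ K V) (c : Option V) :
    (slopePoint (p, c)).map (e : (V × V) →ₗ[K] W) e.injective ∈ pointsWithOrbitCard K H W (2 * m) ↔
      p ∈ pointsWithOrbitCard K G V m ∧ c ∈ insert none (some '' insert 0 (orbit G p.rep)) := by
  have hleft := hH.ncard_orbit_left hG p.rep_nonzero
  rcases c with _ | c
  · rw [slopePoint, Projectivization.map_mk, mk_mem_pointsWithOrbitCard_iff]
    have hright : (orbit H (e (0, p.rep))).ncard = 2 * (orbit G p.rep).ncard :=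
      (congrArg Set.ncard (hH.orbit_swap p.rep 0)).trans hleft
    simp [pointsWithOrbitCard, hright]
  rw [slopePoint, Projectivization.map_mk, mk_mem_pointsWithOrbitCard_iff]
  rcases eq_or_ne c 0 with rfl | hc
  · have hleft : (orbit H (e (p.rep, 0))).ncard = 2 * (orbit G p.rep).ncard := hleft
    simp [pointsWithOrbitCard, hleft]
  · have := hH.ncard_orbit_eq_two_mul_iff hG hm p.rep_nonzero hc
    simpa [hc, pointsWithOrbitCard] using this

theorem ncard_pointsWithOrbitCard (hG : IsPauliAction G V) (hH : IsDoubling G H (e : V × V ≃+ W))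
    (hm : ∀ v : V, v ≠ 0 → m ≤ (orbit G v).ncard) :
    (pointsWithOrbitCard K H W (2 * m)).ncard =
      (pointsWithOrbitCard K G V m).ncard * (m + 2) := by
  have hpoint := (map_linearEquiv_bijective e).comp ⟨slopePoint_injective, slopePoint_surjective⟩
  have hfiber : ∀ p ∈ pointsWithOrbitCard K G V m,
      (insert none (some '' insert 0 (orbit G p.rep))).ncard = m + 2 := by
    intro p hp
    have hfinite := Finite.finite_mulAction_orbit (M := G) p.rep
    have zero_notMem : 0 ∉ orbit G p.rep := by
      rintro ⟨g, hg⟩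
      exact p.rep_nonzero ((smul_eq_zero_iff_eq g).1 hg)
    rw [Set.ncard_insert_of_notMem (by simp) ((hfinite.insert 0).image _),
      Set.ncard_image_of_injective _ (Option.some_injective V),
      Set.ncard_insert_of_notMem zero_notMem hfinite, hp]
  rw [← ncard_setOf_mem_and_mem (by omega) hfiber,
    ← Set.ncard_preimage_of_injective_subset_range hpoint.injective
      (hpoint.surjective.range_eq ▸ Set.subset_univ _)]
  congr 1
  ext ⟨p, c⟩
  exact hH.map_slopePoint_mem_iff hG hm p c

end IsDoubling

theorem phase_iff_pow_four_eq_one {α : ℂ} :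
    (α = 1 ∨ α = -1 ∨ α = Complex.I ∨ α = -Complex.I) ↔ α ^ 4 = 1 := by
  constructor
  · rintro (rfl | rfl | rfl | rfl) <;> norm_num [Complex.I_pow_four, Even.neg_pow]
  · intro h
    have factorization : (α - 1) * ((α + 1) * ((α - Complex.I) * (α + Complex.I))) = 0 := by
      linear_combination h + (1 - α ^ 2) * Complex.I_sq
    simpa only [mul_eq_zero, sub_eq_zero, add_eq_zero_iff_eq_neg] using factorization

theorem ncard_setOf_pow_four_eq_one : {α : ℂ | α ^ 4 = 1}.ncard = 4 := by
  have : {α : ℂ | α ^ 4 = 1} = Polynomial.nthRootsFinset 4 (1 : ℂ) := by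
    ext α
    simp
  rw [this, Set.ncard_coe_finset, (Complex.isPrimitiveRoot_exp 4 four_ne_zero).card_nthRootsFinset]

/-- The vector space of `n`-qubit states. -/
abbrev QVec (n : ℕ) := (Fin n → Fin 2) → ℂ

/-- Prepending a qubit in the basis state `0` (left summand) or `1` (right summand). -/
def prependQubit (n : ℕ) : (Fin n → Fin 2) ⊕ (Fin n → Fin 2) ≃ (Fin (n + 1) → Fin 2) :=
  (Equiv.boolProdEquivSum _).symm.trans
    ((finTwoEquiv.symm.prodCongr (.refl _)).trans (Fin.consEquiv fun _ => Fin 2))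

/-- The vector with components `a` and `b` along the basis states `0` and `1` of the first qubit. -/
def prodEquivQVecSucc (n : ℕ) : (QVec n × QVec n) ≃ₗ[ℂ] QVec (n + 1) :=
  (LinearEquiv.sumArrowLequivProdArrow _ _ ℂ ℂ).symm.trans
    (LinearEquiv.funCongrLeft ℂ ℂ (prependQubit n).symm)

section PauliGroup

variable {n : ℕ}

/-- The block matrix `[[g, 0], [0, ε g]]`, with respect to the first qubit. -/
def diagonalBlocks (g : QMat n) (ε : ℤˣ) : QMat (n + 1) :=
  reindexAlgEquiv ℂ ℂ (prependQubit n) (fromBlocks g 0 0 (ε • g))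

/-- The block matrix `[[0, g], [ε g, 0]]`, with respect to the first qubit. -/
def antidiagonalBlocks (g : QMat n) (ε : ℤˣ) : QMat (n + 1) :=
  reindexAlgEquiv ℂ ℂ (prependQubit n) (fromBlocks 0 g (ε • g) 0)

section Blocks

variable (g h : QMat n) (ε δ : ℤˣ) (a b : QVec n)

theorem prodEquivQVecSucc_apply :
    prodEquivQVecSucc n (a, b) = Sum.elim a b ∘ (prependQubit n).symm := rfl

theorem reindexAlgEquiv_mulVec
    (M : Matrix ((Fin n → Fin 2) ⊕ (Fin n → Fin 2)) ((Fin n → Fin 2) ⊕ (Fin n → Fin 2)) ℂ) :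
    reindexAlgEquiv ℂ ℂ (prependQubit n) M *ᵥ prodEquivQVecSucc n (a, b) =
      (M *ᵥ Sum.elim a b) ∘ (prependQubit n).symm := by
  rw [coe_reindexAlgEquiv, reindex_apply, submatrix_mulVec_equiv]
  congr 2
  ext x
  simp [prodEquivQVecSucc_apply]

theorem diagonalBlocks_mulVec : diagonalBlocks g ε *ᵥ prodEquivQVecSucc n (a, b) =
    prodEquivQVecSucc n (g *ᵥ a, ε • (g *ᵥ b)) := by
  rw [diagonalBlocks, reindexAlgEquiv_mulVec, fromBlocks_mulVec]
  simp [prodEquivQVecSucc_apply, smul_mulVec]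

theorem antidiagonalBlocks_mulVec : antidiagonalBlocks g ε *ᵥ prodEquivQVecSucc n (a, b) =
    prodEquivQVecSucc n (g *ᵥ b, ε • (g *ᵥ a)) := by
  rw [antidiagonalBlocks, reindexAlgEquiv_mulVec, fromBlocks_mulVec]
  simp [prodEquivQVecSucc_apply, smul_mulVec]

theorem diagonalBlocks_sign_smul_one : diagonalBlocks (δ • (1 : QMat n)) 1 = δ • 1 := by
  have : fromBlocks (δ • (1 : QMat n)) 0 0 (δ • (1 : QMat n)) = δ • 1 := by
    rw [← fromBlocks_one, fromBlocks_smul, smul_zero]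
  rw [diagonalBlocks, one_smul, this, Units.smul_def, map_zsmul, map_one,
    Units.smul_def]

theorem smul_diagonalBlocks (α : ℂ) : α • diagonalBlocks g ε = diagonalBlocks (α • g) ε := by
  rw [diagonalBlocks, diagonalBlocks, ← map_smul, fromBlocks_smul, smul_zero, smul_comm α]

theorem smul_antidiagonalBlocks (α : ℂ) :
    α • antidiagonalBlocks g ε = antidiagonalBlocks (α • g) ε := by
  rw [antidiagonalBlocks, antidiagonalBlocks, ← map_smul, fromBlocks_smul, smul_zero, smul_comm α]

theorem diagonalBlocks_mul_diagonalBlocks :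
    diagonalBlocks g ε * diagonalBlocks h δ = diagonalBlocks (g * h) (ε * δ) := by
  rw [mul_comm ε]
  simp [diagonalBlocks, fromBlocks_multiply, smul_smul]

theorem diagonalBlocks_mul_antidiagonalBlocks :
    diagonalBlocks g ε * antidiagonalBlocks h δ = antidiagonalBlocks (g * h) (ε * δ) := by
  rw [mul_comm ε]
  simp [diagonalBlocks, antidiagonalBlocks, fromBlocks_multiply, smul_smul]

theorem antidiagonalBlocks_mul_diagonalBlocks :
    antidiagonalBlocks g ε * diagonalBlocks h δ = antidiagonalBlocks (δ • (g * h)) (ε * δ) := by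
  simp [diagonalBlocks, antidiagonalBlocks, fromBlocks_multiply, smul_smul, mul_assoc]

theorem antidiagonalBlocks_mul_antidiagonalBlocks :
    antidiagonalBlocks g ε * antidiagonalBlocks h δ = diagonalBlocks (δ • (g * h)) (ε * δ) := by
  simp [diagonalBlocks, antidiagonalBlocks, fromBlocks_multiply, smul_smul, mul_assoc]

end Blocks

theorem kron_succ (P : Fin (n + 1) → Matrix (Fin 2) (Fin 2) ℂ) :
    kron P = reindexAlgEquiv ℂ ℂ (prependQubit n)
      (fromBlocks (P 0 0 0 • kron (Fin.tail P)) (P 0 0 1 • kron (Fin.tail P))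
        (P 0 1 0 • kron (Fin.tail P)) (P 0 1 1 • kron (Fin.tail P))) := by
  ext x y
  obtain ⟨x, rfl⟩ := (prependQubit n).surjective x
  obtain ⟨y, rfl⟩ := (prependQubit n).surjective y
  rcases x with x | x <;> rcases y with y | y <;>
    simp [kron, prependQubit, Fin.prod_univ_succ, Fin.tail, finTwoEquiv]

section KronCons

variable (P : Fin n → Matrix (Fin 2) (Fin 2) ℂ)

theorem kron_cons_one : kron (Fin.cons 1 P : Fin (n + 1) → _) = diagonalBlocks (kron P) 1 := by
  simp [kron_succ, diagonalBlocks]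

theorem kron_cons_pZ : kron (Fin.cons pZ P : Fin (n + 1) → _) = diagonalBlocks (kron P) (-1) := by
  simp [kron_succ, diagonalBlocks, pZ]

theorem kron_cons_pX : kron (Fin.cons pX P : Fin (n + 1) → _) = antidiagonalBlocks (kron P) 1 := by
  simp [kron_succ, antidiagonalBlocks, pX]

theorem I_smul_kron_cons_pY : Complex.I • kron (Fin.cons pY P : Fin (n + 1) → _) =
    antidiagonalBlocks (kron P) (-1) := by
  rw [kron_succ, antidiagonalBlocks, ← map_smul, fromBlocks_smul]
  simp [pY, smul_smul]

end KronCons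

theorem mem_pauliGroup_zero {M : QMat 0} :
    M ∈ PauliGroup 0 ↔ ∃ α : ℂ, α ^ 4 = 1 ∧ M = α • 1 := by
  have kron_zero (P : Fin 0 → Matrix (Fin 2) (Fin 2) ℂ) : kron P = 1 := by
    ext x y
    obtain rfl := Subsingleton.elim x y
    simp [kron]
  simp [PauliGroup, phase_iff_pow_four_eq_one, kron_zero]

theorem smul_mem_pauliGroup {α : ℂ} (hα : α ^ 4 = 1) {M : QMat n} (hM : M ∈ PauliGroup n) :
    α • M ∈ PauliGroup n := by
  obtain ⟨β, hβ, P, hP, rfl⟩ := hM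
  rw [phase_iff_pow_four_eq_one] at hβ
  exact ⟨α * β, phase_iff_pow_four_eq_one.2 (by rw [mul_pow, hα, hβ, one_mul]), P, hP,
    smul_smul α β _⟩

theorem sign_smul_mem_pauliGroup (ε : ℤˣ) {M : QMat n} (hM : M ∈ PauliGroup n) :
    ε • M ∈ PauliGroup n := by
  rcases Int.units_eq_one_or ε with rfl | rfl
  · rwa [one_smul]
  · simpa using smul_mem_pauliGroup (α := -1) (by norm_num) hM

theorem smul_kron_cons_mem_pauliGroup {α : ℂ}
    (hα : α = 1 ∨ α = -1 ∨ α = Complex.I ∨ α = -Complex.I)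
    (A : Matrix (Fin 2) (Fin 2) ℂ) (hA : A = 1 ∨ A = pX ∨ A = pY ∨ A = pZ)
    {P : Fin n → Matrix (Fin 2) (Fin 2) ℂ} (hP : ∀ j, P j = 1 ∨ P j = pX ∨ P j = pY ∨ P j = pZ) :
    α • kron (Fin.cons A P : Fin (n + 1) → _) ∈ PauliGroup (n + 1) :=
  ⟨α, hα, _, Fin.cases hA hP, rfl⟩

theorem mem_pauliGroup_succ {M : QMat (n + 1)} :
    M ∈ PauliGroup (n + 1) ↔ ∃ g ∈ PauliGroup n, ∃ ε : ℤˣ,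
      M = diagonalBlocks g ε ∨ M = antidiagonalBlocks g ε := by
  constructor
  · rintro ⟨α, hα, P, hP, rfl⟩
    have hg : α • kron (Fin.tail P) ∈ PauliGroup n :=
      ⟨α, hα, Fin.tail P, fun j => hP j.succ, rfl⟩
    rw [← Fin.cons_self_tail P]
    rcases hP 0 with h | h | h | h <;> rw [h]
    · exact ⟨_, hg, 1, .inl (by rw [kron_cons_one, smul_diagonalBlocks])⟩
    · exact ⟨_, hg, 1, .inr (by rw [kron_cons_pX, smul_antidiagonalBlocks])⟩
    · have hI : (-Complex.I) ^ 4 = 1 := phase_iff_pow_four_eq_one.1 (by simp)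
      refine ⟨_, smul_mem_pauliGroup hI hg, -1, .inr ?_⟩
      rw [← smul_antidiagonalBlocks, ← smul_antidiagonalBlocks, ← I_smul_kron_cons_pY, smul_smul,
        smul_smul, show -Complex.I * α * Complex.I = α by linear_combination -α * Complex.I_sq]
    · exact ⟨_, hg, -1, .inl (by rw [kron_cons_pZ, smul_diagonalBlocks])⟩
  · rintro ⟨_, ⟨α, hα, P, hP, rfl⟩, ε, rfl | rfl⟩ <;> rcases Int.units_eq_one_or ε with rfl | rfl
    · rw [← smul_diagonalBlocks, ← kron_cons_one]
      exact smul_kron_cons_mem_pauliGroup hα 1 (by simp) hP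
    · rw [← smul_diagonalBlocks, ← kron_cons_pZ]
      exact smul_kron_cons_mem_pauliGroup hα pZ (by simp) hP
    · rw [← smul_antidiagonalBlocks, ← kron_cons_pX]
      exact smul_kron_cons_mem_pauliGroup hα pX (by simp) hP
    · rw [← smul_antidiagonalBlocks, ← I_smul_kron_cons_pY, smul_comm]
      exact smul_mem_pauliGroup Complex.I_pow_four
        (smul_kron_cons_mem_pauliGroup hα pY (by simp) hP)

theorem one_mem_pauliGroup : ∀ n, 1 ∈ PauliGroup n
  | 0 => mem_pauliGroup_zero.2 ⟨1, one_pow 4, (one_smul ℂ 1).symm⟩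
  | n + 1 => mem_pauliGroup_succ.2 ⟨1, one_mem_pauliGroup n, 1, .inl <| by
      simpa only [one_smul] using (diagonalBlocks_sign_smul_one (n := n) 1).symm⟩

theorem mul_mem_pauliGroup {g h : QMat n} (hg : g ∈ PauliGroup n) (hh : h ∈ PauliGroup n) :
    g * h ∈ PauliGroup n := by
  induction n with
  | zero =>
    obtain ⟨α, hα, rfl⟩ := mem_pauliGroup_zero.1 hg
    rw [smul_mul_assoc, one_mul]
    exact smul_mem_pauliGroup hα hh
  | succ n ih =>
    rw [mem_pauliGroup_succ] at hg hh ⊢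
    obtain ⟨g, hg, ε, rfl | rfl⟩ := hg <;> obtain ⟨h, hh, δ, rfl | rfl⟩ := hh
    · exact ⟨_, ih hg hh, _, .inl (diagonalBlocks_mul_diagonalBlocks g h ε δ)⟩
    · exact ⟨_, ih hg hh, _, .inr (diagonalBlocks_mul_antidiagonalBlocks g h ε δ)⟩
    · exact ⟨_, sign_smul_mem_pauliGroup δ (ih hg hh), _,
        .inr (antidiagonalBlocks_mul_diagonalBlocks g h ε δ)⟩
    · exact ⟨_, sign_smul_mem_pauliGroup δ (ih hg hh), _,
        .inl (antidiagonalBlocks_mul_antidiagonalBlocks g h ε δ)⟩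

theorem exists_mul_self_eq_sign_smul_one {g : QMat n} (hg : g ∈ PauliGroup n) :
    ∃ ε : ℤˣ, g * g = ε • 1 := by
  induction n with
  | zero =>
    obtain ⟨α, hα, rfl⟩ := mem_pauliGroup_zero.1 hg
    have hα' : (α ^ 2) ^ 2 = 1 := by rw [← pow_mul, hα]
    rcases sq_eq_one_iff.1 hα' with h | h
    · exact ⟨1, by rw [smul_mul_smul_comm, ← sq, h, one_mul, one_smul, one_smul]⟩
    · exact ⟨-1, by rw [smul_mul_smul_comm, ← sq, h, one_mul, neg_one_smul, Units.neg_smul,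
        one_smul]⟩
  | succ n ih =>
    rw [mem_pauliGroup_succ] at hg
    obtain ⟨g, hg, ε, rfl | rfl⟩ := hg <;> obtain ⟨δ, hδ⟩ := ih hg
    · exact ⟨δ, by rw [diagonalBlocks_mul_diagonalBlocks, hδ, Int.units_mul_self,
        diagonalBlocks_sign_smul_one]⟩
    · exact ⟨ε * δ, by rw [antidiagonalBlocks_mul_antidiagonalBlocks, hδ, Int.units_mul_self,
        smul_smul, diagonalBlocks_sign_smul_one]⟩

theorem ncard_pauliGroup_zero : (PauliGroup 0).ncard = 4 := by
  have : PauliGroup 0 = (fun α : ℂ => α • (1 : QMat 0)) '' {α | α ^ 4 = 1} := by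
    ext M
    simp [mem_pauliGroup_zero, eq_comm]
  rw [this, Set.ncard_image_of_injective _ (smul_left_injective ℂ one_ne_zero),
    ncard_setOf_pow_four_eq_one]

theorem zero_notMem_pauliGroup : (0 : QMat n) ∉ PauliGroup n := by
  intro h
  obtain ⟨ε, hε⟩ := exists_mul_self_eq_sign_smul_one h
  rw [zero_mul, eq_comm, smul_eq_zero_iff_eq] at hε
  exact one_ne_zero hε

theorem eq_of_sign_smul_eq_sign_smul {g : QMat n} (hg : g ∈ PauliGroup n) {ε δ : ℤˣ}
    (h : ε • g = δ • g) : ε = δ :=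
  have : IsAddTorsionFree (QMat n) := inferInstanceAs (IsAddTorsionFree (_ → _ → ℂ))
  units_smul_left_injective (fun h0 => zero_notMem_pauliGroup (h0 ▸ hg)) h

theorem injOn_diagonalBlocks :
    Set.InjOn (Function.uncurry diagonalBlocks) (PauliGroup n ×ˢ Set.univ) := by
  rintro ⟨g, ε⟩ ⟨hg, -⟩ ⟨h, δ⟩ - heq
  obtain ⟨rfl, -, -, hsmul⟩ := fromBlocks_inj.1 ((reindexAlgEquiv ℂ ℂ _).injective heq)
  exact Prod.ext rfl (eq_of_sign_smul_eq_sign_smul hg hsmul)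

theorem injOn_antidiagonalBlocks :
    Set.InjOn (Function.uncurry antidiagonalBlocks) (PauliGroup n ×ˢ Set.univ) := by
  rintro ⟨g, ε⟩ ⟨hg, -⟩ ⟨h, δ⟩ - heq
  obtain ⟨-, rfl, hsmul, -⟩ := fromBlocks_inj.1 ((reindexAlgEquiv ℂ ℂ _).injective heq)
  exact Prod.ext rfl (eq_of_sign_smul_eq_sign_smul hg hsmul)

theorem pauliGroup_succ_eq_union : PauliGroup (n + 1) =
    Function.uncurry diagonalBlocks '' (PauliGroup n ×ˢ Set.univ) ∪
      Function.uncurry antidiagonalBlocks '' (PauliGroup n ×ˢ Set.univ) := by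
  ext M
  simp only [mem_pauliGroup_succ, Set.mem_union, Set.mem_image, Set.mem_prod, Set.mem_univ,
    and_true, Prod.exists, ← exists_or, ← and_or_left, exists_and_left, eq_comm,
    Function.uncurry_apply_pair]

theorem disjoint_diagonalBlocks_antidiagonalBlocks :
    Disjoint (Function.uncurry diagonalBlocks '' (PauliGroup n ×ˢ Set.univ))
      (Function.uncurry antidiagonalBlocks '' (PauliGroup n ×ˢ Set.univ)) := by
  rw [Set.disjoint_left]
  rintro _ ⟨⟨g, ε⟩, ⟨hg, -⟩, rfl⟩ ⟨⟨h, δ⟩, -, heq⟩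
  obtain ⟨h0, -⟩ := fromBlocks_inj.1 ((reindexAlgEquiv ℂ ℂ _).injective heq)
  exact zero_notMem_pauliGroup (h0 ▸ hg)

theorem ncard_pauliGroup : ∀ n, (PauliGroup n).ncard = 4 ^ (n + 1)
  | 0 => ncard_pauliGroup_zero
  | n + 1 => by
    have hfinite : (PauliGroup n).Finite :=
      Set.finite_of_ncard_ne_zero (by simp [ncard_pauliGroup n])
    have hprod := hfinite.prod (Set.finite_univ (α := ℤˣ))
    rw [pauliGroup_succ_eq_union,
      Set.ncard_union_eq disjoint_diagonalBlocks_antidiagonalBlocks (hprod.image _) (hprod.image _),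
      injOn_diagonalBlocks.ncard_image, injOn_antidiagonalBlocks.ncard_image, Set.ncard_prod,
      ncard_pauliGroup n, Set.ncard_univ, Nat.card_eq_fintype_card, Fintype.card_units_int]
    ring

/-- The Pauli group as a group of invertible matrices. It acts on `QVec n` by matrix-vector
multiplication, through Mathlib's `Matrix` action on vectors. -/
def pauliSubgroup (n : ℕ) : Subgroup (QMat n)ˣ where
  carrier := {u | (u : QMat n) ∈ PauliGroup n}
  one_mem' := one_mem_pauliGroup n
  mul_mem' := mul_mem_pauliGroup
  inv_mem' := by
    intro u hu
    obtain ⟨ε, hε⟩ := exists_mul_self_eq_sign_smul_one hu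
    have : ((u⁻¹ : (QMat n)ˣ) : QMat n) = ε • (u : QMat n) :=
      Units.inv_eq_of_mul_eq_one_right (by
        rw [mul_smul_comm, hε, smul_smul, Int.units_mul_self, one_smul])
    rw [Set.mem_ofPred_eq, this]
    exact sign_smul_mem_pauliGroup ε hu

theorem exists_val_eq_of_mem_pauliGroup {g : QMat n} (hg : g ∈ PauliGroup n) :
    ∃ u : pauliSubgroup n, (u.1 : QMat n) = g := by
  obtain ⟨ε, hε⟩ := exists_mul_self_eq_sign_smul_one hg
  refine ⟨⟨⟨g, ε • g, ?_, ?_⟩, hg⟩, rfl⟩ <;>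
    simp [hε, smul_smul]

theorem card_pauliSubgroup (n : ℕ) : Nat.card (pauliSubgroup n) = 4 ^ (n + 1) := by
  have : PauliGroup n = Set.range fun u : pauliSubgroup n => (u.1 : QMat n) := by
    ext g
    exact ⟨exists_val_eq_of_mem_pauliGroup, by rintro ⟨u, rfl⟩; exact u.2⟩
  rw [← ncard_pauliGroup, this, ← Set.image_univ,
    Set.ncard_image_of_injective _ fun _ _ h => Subtype.ext (Units.ext h), Set.ncard_univ]

instance (n : ℕ) : Finite (pauliSubgroup n) :=
  Nat.finite_of_card_ne_zero (by simp [card_pauliSubgroup])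

theorem pauliSubgroup_smul (u : pauliSubgroup n) (v : QVec n) : u • v = (u.1 : QMat n) *ᵥ v := rfl

theorem isPauliAction_pauliSubgroup (n : ℕ) : IsPauliAction (pauliSubgroup n) (QVec n) where
  exists_smul_eq_sign_smul ε := by
    obtain ⟨u, hu⟩ := exists_val_eq_of_mem_pauliGroup
      (sign_smul_mem_pauliGroup ε (one_mem_pauliGroup n))
    exact ⟨u, fun v => by rw [pauliSubgroup_smul, hu, smul_mulVec, one_mulVec]⟩
  exists_smul_smul_eq_sign_smul u := by
    obtain ⟨ε, hε⟩ := exists_mul_self_eq_sign_smul_one u.2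
    exact ⟨ε, fun v => by
      rw [pauliSubgroup_smul, pauliSubgroup_smul, mulVec_mulVec, hε, smul_mulVec, one_mulVec]⟩

theorem isDoubling_pauliSubgroup (n : ℕ) : IsDoubling (pauliSubgroup n) (pauliSubgroup (n + 1))
    (prodEquivQVecSucc n : QVec n × QVec n ≃+ QVec (n + 1)) where
  exists_smul_eq u := by
    obtain ⟨g, hg, ε, hu⟩ := mem_pauliGroup_succ.1 u.2
    obtain ⟨u', rfl⟩ := exists_val_eq_of_mem_pauliGroup hg
    refine ⟨u', ε, hu.imp (fun hu a b => ?_) fun hu a b => ?_⟩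
    · exact (congrArg (· *ᵥ _) hu).trans (diagonalBlocks_mulVec _ ε a b)
    · exact (congrArg (· *ᵥ _) hu).trans (antidiagonalBlocks_mulVec _ ε a b)
  exists_diagonal u ε := by
    obtain ⟨u', hu'⟩ := exists_val_eq_of_mem_pauliGroup
      (mem_pauliGroup_succ.2 ⟨_, u.2, ε, .inl rfl⟩)
    exact ⟨u', fun a b => (congrArg (· *ᵥ _) hu').trans (diagonalBlocks_mulVec _ ε a b)⟩
  exists_antidiagonal u ε := by
    obtain ⟨u', hu'⟩ := exists_val_eq_of_mem_pauliGroup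
      (mem_pauliGroup_succ.2 ⟨_, u.2, ε, .inr rfl⟩)
    exact ⟨u', fun a b => (congrArg (· *ᵥ _) hu').trans (antidiagonalBlocks_mulVec _ ε a b)⟩

theorem ncard_orbit_pauliSubgroup_zero {v : QVec 0} (hv : v ≠ 0) :
    (orbit (pauliSubgroup 0) v).ncard = 4 := by
  have : orbit (pauliSubgroup 0) v = (· • v) '' {α : ℂ | α ^ 4 = 1} := by
    ext w
    constructor
    · rintro ⟨u, rfl⟩
      obtain ⟨α, hα, hu⟩ := mem_pauliGroup_zero.1 u.2
      exact ⟨α, hα, by simp only [pauliSubgroup_smul, hu, smul_mulVec, one_mulVec]⟩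
    · rintro ⟨α, hα, rfl⟩
      obtain ⟨u, hu⟩ := exists_val_eq_of_mem_pauliGroup (mem_pauliGroup_zero.2 ⟨α, hα, rfl⟩)
      exact ⟨u, by simp only [pauliSubgroup_smul, hu, smul_mulVec, one_mulVec]⟩
  rw [this, Set.ncard_image_of_injective _ (smul_left_injective ℂ hv), ncard_setOf_pow_four_eq_one]

theorem two_pow_le_ncard_orbit_pauliSubgroup {v : QVec n} (hv : v ≠ 0) :
    2 ^ (n + 2) ≤ (orbit (pauliSubgroup n) v).ncard := by
  induction n with
  | zero => exact (ncard_orbit_pauliSubgroup_zero hv).ge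
  | succ n ih =>
    rw [pow_succ']
    exact (isDoubling_pauliSubgroup n).two_mul_le_ncard_orbit (isPauliAction_pauliSubgroup n)
      (fun _ => ih) hv

theorem ncard_pointsWithOrbitCard_pauliSubgroup (n : ℕ) :
    (pointsWithOrbitCard ℂ (pauliSubgroup n) (QVec n) (2 ^ (n + 2))).ncard =
      2 ^ n * ∏ k ∈ Finset.range n, (2 ^ (n - k) + 1) := by
  induction n with
  | zero =>
    have hpoints : pointsWithOrbitCard ℂ (pauliSubgroup 0) (QVec 0) (2 ^ (0 + 2)) = Set.univ :=
      Set.eq_univ_of_forall fun p => ncard_orbit_pauliSubgroup_zero p.rep_nonzero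
    rw [hpoints, Set.ncard_univ, card_projectivization_of_finrank_eq_one (by simp)]
    rfl
  | succ n ih =>
    rw [pow_succ', (isDoubling_pauliSubgroup n).ncard_pointsWithOrbitCard
      (isPauliAction_pauliSubgroup n) fun _ => two_pow_le_ncard_orbit_pauliSubgroup, ih,
      Finset.prod_range_succ']
    simp only [Nat.add_sub_add_right, Nat.sub_zero]
    ring

theorem ncard_setOf_mulVec_eq_mul_ncard_orbit (v : QVec n) :
    {P | P ∈ PauliGroup n ∧ P *ᵥ v = v}.ncard * (orbit (pauliSubgroup n) v).ncard =
      4 ^ (n + 1) := by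
  have : {P | P ∈ PauliGroup n ∧ P *ᵥ v = v} =
      (fun u : pauliSubgroup n => (u.1 : QMat n)) '' stabilizer (pauliSubgroup n) v := by
    ext P
    constructor
    · rintro ⟨hP, hPv⟩
      obtain ⟨u, rfl⟩ := exists_val_eq_of_mem_pauliGroup hP
      exact ⟨u, hPv, rfl⟩
    · rintro ⟨u, hu, rfl⟩
      exact ⟨u.2, hu⟩
  rw [this, Set.ncard_image_of_injective _ fun _ _ h => Subtype.ext (Units.ext h),
    ← index_stabilizer, ← card_pauliSubgroup]
  exact (stabilizer (pauliSubgroup n) v).card_mul_index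

theorem ncard_stabilizer_eq_iff (p : ℙ ℂ (QVec n)) :
    {P | P ∈ PauliGroup n ∧ ∀ ψ ∈ p.submodule, P *ᵥ ψ = ψ}.ncard = 2 ^ n ↔
      p ∈ pointsWithOrbitCard ℂ (pauliSubgroup n) (QVec n) (2 ^ (n + 2)) := by
  have : {P | P ∈ PauliGroup n ∧ ∀ ψ ∈ p.submodule, P *ᵥ ψ = ψ} =
      {P | P ∈ PauliGroup n ∧ P *ᵥ p.rep = p.rep} := by
    ext P
    refine and_congr_right fun _ => ?_
    rw [p.submodule_eq]
    constructor
    · exact fun h => h _ (Submodule.mem_span_singleton_self _)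
    · intro h ψ hψ
      obtain ⟨c, rfl⟩ := Submodule.mem_span_singleton.1 hψ
      rw [mulVec_smul, h]
  have hmul := ncard_setOf_mulVec_eq_mul_ncard_orbit p.rep
  have hpow : 4 ^ (n + 1) = 2 ^ n * 2 ^ (n + 2) := by
    rw [← pow_add, show 4 = 2 ^ 2 by rfl, ← pow_mul]
    ring
  rw [hpow] at hmul
  rw [this, pointsWithOrbitCard, Set.mem_ofPred_eq]
  constructor
  · intro h
    exact Nat.eq_of_mul_eq_mul_left (by positivity) (h ▸ hmul)
  · intro h
    exact Nat.eq_of_mul_eq_mul_right (by positivity) (h ▸ hmul)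

end PauliGroup

/-- The number of `n`-qubit pure stabilizer states (one-dimensional
subspaces of `ℂ^(2^n)` whose Pauli stabilizer has exactly `2^n` elements) equals
`2^n · ∏_{k=0}^{n-1} (2^(n-k) + 1)`. -/
theorem number_of_stabilizer_states (n : ℕ) :
    {W : Submodule ℂ ((Fin n → Fin 2) → ℂ) |
        Module.finrank ℂ W = 1 ∧
        {P | P ∈ PauliGroup n ∧ ∀ ψ ∈ W, P.mulVec ψ = ψ}.ncard = 2 ^ n}.ncard =
      2 ^ n * ∏ k ∈ Finset.range n, (2 ^ (n - k) + 1) := by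
  rw [← ncard_pointsWithOrbitCard_pauliSubgroup,
    ← Set.ncard_image_of_injective _ Projectivization.submodule_injective]
  congr 1
  ext W
  constructor
  · rintro ⟨hW, hcard⟩
    refine ⟨.mk'' W hW, (ncard_stabilizer_eq_iff _).1 ?_, Projectivization.submodule_mk'' W hW⟩
    rwa [Projectivization.submodule_mk'']
  · rintro ⟨p, hp, rfl⟩
    exact ⟨p.finrank_submodule, (ncard_stabilizer_eq_iff p).2 hp⟩
end
end

section
/- For any symmetric matrix A ∈ GF(2)^{n×n}, there exists a diagonal matrix Λ ∈ GF(2)^{n×n} and an invertible matrix M ∈ GF(2)^{n×n} such that A + Λ = M·Mᵀ; moreover M can be taken to be lower triangular with all diagonal entries equal to 1. -/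
open Matrix

noncomputable section

/-!
The equations `(M * Mᵀ) i j = A i j` for `j < i` can be solved for a lower unitriangular `M` one
column at a time, as in the Cholesky algorithm: the pivots are all `1`, so no division or square
root is needed, and the diagonal of `M * Mᵀ` is left unconstrained. Symmetry gives the equations
above the diagonal, and the discrepancy on the diagonal is absorbed by `Λ`.
-/

section UnitCholesky

variable {ι R : Type*} [Fintype ι] [LinearOrder ι]

theorem mul_transpose_apply_of_isLowerTriangular [NonUnitalNonAssocSemiring R]
    {M N : Matrix ι ι R} (hN : N.IsLowerTriangular) (i j : ι) :
    (M * Nᵀ) i j = ∑ k with k < j, M i k * N j k + M i j * N j j := by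
  have sum_not_lt : ∑ k with ¬ k < j, M i k * N j k = M i j * N j j :=
    Finset.sum_eq_single_of_mem j (by simp) fun k hk hkj => by
      have hjk : j < k := lt_of_le_of_ne (by simpa using hk) hkj.symm
      rw [hN hjk, mul_zero]
  simp only [← sum_not_lt, Finset.sum_filter_add_sum_filter_not, Matrix.mul_apply,
    Matrix.transpose_apply]

theorem isUnit_iff_of_isLowerTriangular [CommRing R] {M : Matrix ι ι R}
    (hM : M.IsLowerTriangular) :
    IsUnit M ↔ ∀ i, IsUnit (M i i) := by
  rw [Matrix.isUnit_iff_isUnit_det, Matrix.det_of_isLowerTriangular M hM, IsUnit.prod_univ_iff]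

section Ring

variable [Ring R]

/-- The lower unitriangular factor produced by the Cholesky algorithm when every pivot is set
to `1`, so that its product with its transpose agrees with `A` strictly below the diagonal.
The recursion is on the column index. -/
def unitCholesky (A : Matrix ι ι R) : Matrix ι ι R := fun i j =>
  if j < i then A i j - ∑ k : {k // k < j}, unitCholesky A i k * unitCholesky A j k
  else if i = j then 1 else 0
termination_by _ j => wellFounded_lt.wrap j
decreasing_by all_goals exact k.2

theorem unitCholesky_apply_self (A : Matrix ι ι R) (i : ι) : unitCholesky A i i = 1 := by
  rw [unitCholesky, if_neg (lt_irrefl i), if_pos rfl]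

theorem isLowerTriangular_unitCholesky (A : Matrix ι ι R) :
    (unitCholesky A).IsLowerTriangular := by
  intro i j (hij : i < j)
  rw [unitCholesky, if_neg hij.not_gt, if_neg hij.ne]

theorem unitCholesky_apply_of_lt (A : Matrix ι ι R) {i j : ι} (hji : j < i) :
    unitCholesky A i j = A i j - ∑ k with k < j, unitCholesky A i k * unitCholesky A j k := by
  rw [unitCholesky, if_pos hji, ← Finset.sum_subtype_eq_sum_filter, Finset.subtype_univ]

theorem unitCholesky_mul_transpose_apply_of_lt (A : Matrix ι ι R) {i j : ι} (hji : j < i) :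
    (unitCholesky A * (unitCholesky A)ᵀ) i j = A i j := by
  rw [mul_transpose_apply_of_isLowerTriangular (isLowerTriangular_unitCholesky A),
    unitCholesky_apply_self, mul_one, unitCholesky_apply_of_lt A hji, add_sub_cancel]

end Ring

section CommRing

variable [CommRing R]

theorem isUnit_unitCholesky (A : Matrix ι ι R) : IsUnit (unitCholesky A) :=
  (isUnit_iff_of_isLowerTriangular (isLowerTriangular_unitCholesky A)).mpr fun i =>
    unitCholesky_apply_self A i ▸ isUnit_one

theorem isDiag_unitCholesky_mul_transpose_sub {A : Matrix ι ι R} (hA : A.IsSymm) :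
    (unitCholesky A * (unitCholesky A)ᵀ - A).IsDiag := by
  intro i j hij
  rw [Matrix.sub_apply, sub_eq_zero]
  rcases hij.lt_or_gt with hlt | hgt
  · rw [← (Matrix.isSymm_mul_transpose_self (unitCholesky A)).apply, ← hA.apply i j,
      unitCholesky_mul_transpose_apply_of_lt A hlt]
  · exact unitCholesky_mul_transpose_apply_of_lt A hgt

theorem symmetric_gf2_factorization_general (A : Matrix ι ι R) (hA : A.IsSymm) :
    ∃ Λ M : Matrix ι ι R,
      Λ.IsDiag ∧ (∀ i, M i i = 1) ∧ M.IsLowerTriangular ∧ IsUnit M ∧ A + Λ = M * Mᵀ :=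
  ⟨unitCholesky A * (unitCholesky A)ᵀ - A, unitCholesky A,
    isDiag_unitCholesky_mul_transpose_sub hA, unitCholesky_apply_self A,
    isLowerTriangular_unitCholesky A, isUnit_unitCholesky A, add_sub_cancel _ _⟩

end CommRing

end UnitCholesky

/-- for any symmetric matrix `A` over `GF(2)` there are a diagonal
`Λ` and an invertible `M` (which may be taken lower unitriangular) with `A + Λ = M·Mᵀ`. -/
theorem symmetric_gf2_factorization (n : ℕ) (A : Matrix (Fin n) (Fin n) (ZMod 2))
    (hA : Aᵀ = A) :
    ∃ Λ M : Matrix (Fin n) (Fin n) (ZMod 2),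
      (∀ i j, i ≠ j → Λ i j = 0) ∧
      (∀ i, M i i = 1) ∧ (∀ i j, i < j → M i j = 0) ∧
      IsUnit M ∧ A + Λ = M * Mᵀ := by
  obtain ⟨Λ, M, hΛ, hdiag, hlower, hunit, hAM⟩ := symmetric_gf2_factorization_general A hA
  exact ⟨Λ, M, fun _ _ hij => hΛ hij, hdiag, fun _ _ hij => hlower hij, hunit, hAM⟩
end
end

section
/- For any symmetric matrix A ∈ GF(2)^{n×n}, there is a unique lower unitriangular matrix M ∈ GF(2)^{n×n} such that A_{ij} = (M·Mᵀ)_{ij} for all pairs (i, j) with i ≠ j (equivalently, such that A + Λ = M·Mᵀ for some diagonal matrix Λ). -/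
open Matrix

noncomputable section

/-!
For a lower unitriangular `M` and `j < i`, the `(i, j)` entry of `M * Mᵀ` is `M i j` plus a sum
of products of entries of `M` in columns to the left of `j`. Hence prescribing the entries of
`M * Mᵀ` below the diagonal determines `M` one column at a time, from left to right, without any
division. Symmetry takes care of the entries above the diagonal.
-/

section

variable {m ι R : Type*}

/-- Lower unitriangular matrices, with rows and columns indexed by an arbitrary ordered type. -/
structure IsLowerUnitriangular [LT ι] [Zero R] [One R] (M : Matrix ι ι R) : Prop where
  apply_self : ∀ i, M i i = 1
  isLowerTriangular : M.IsLowerTriangular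

theorem isLowerUnitriangular_iff [LT ι] [Zero R] [One R] {M : Matrix ι ι R} :
    IsLowerUnitriangular M ↔ (∀ i, M i i = 1) ∧ ∀ i j, i < j → M i j = 0 :=
  ⟨fun h ↦ ⟨h.apply_self, fun _ _ hij ↦ h.isLowerTriangular hij⟩,
    fun h ↦ ⟨h.1, fun i j hij ↦ h.2 i j hij⟩⟩

variable [LinearOrder ι]

theorem IsLowerUnitriangular.mul_transpose_apply [Fintype ι] [NonAssocSemiring R]
    {M : Matrix ι ι R} (hM : IsLowerUnitriangular M) (N : Matrix m ι R) (i : m) (j : ι) :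
    (N * Mᵀ) i j = N i j + ∑ k with k < j, N i k * M j k := by
  have sum_ge : ∑ k with ¬k < j, N i k * M j k = N i j := by
    rw [Finset.sum_eq_single_of_mem j (by simp), hM.apply_self, mul_one]
    intro k hk hkj
    have hjk : j < k := (not_lt.mp (Finset.mem_filter.mp hk).2).lt_of_ne' hkj
    rw [hM.isLowerTriangular hjk, mul_zero]
  simp only [Matrix.mul_apply, transpose_apply]
  rw [← Finset.sum_filter_not_add_sum_filter Finset.univ (· < j), sum_ge]

theorem forall_ne_apply_eq_iff_forall_lt_of_isSymm {A B : Matrix ι ι R}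
    (hA : A.IsSymm) (hB : B.IsSymm) :
    (∀ i j, i ≠ j → A i j = B i j) ↔ ∀ i j, j < i → A i j = B i j := by
  refine ⟨fun h i j hji ↦ h i j hji.ne', fun h i j hij ↦ ?_⟩
  rcases hij.lt_or_gt with hij | hji
  · rw [← hA.apply, ← hB.apply, h j i hij]
  · exact h i j hji

section

variable [Fintype ι] [NonAssocRing R] (A : Matrix ι ι R)

/-- The entries of `unitriangularFactor A`, by recursion on the column index `j`. -/
def unitriangularFactorEntry (i j : ι) : R :=
  if i < j then 0
  else if i = j then 1
  else
    A i j - ∑ k : {k // k < j}, unitriangularFactorEntry i k * unitriangularFactorEntry j k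
termination_by wellFounded_lt.wrap j
decreasing_by all_goals exact k.2

/-- The lower unitriangular matrix `M` for which `M * Mᵀ` agrees with `A` below the diagonal. -/
def unitriangularFactor : Matrix ι ι R :=
  of (unitriangularFactorEntry A)

theorem isLowerUnitriangular_unitriangularFactor :
    IsLowerUnitriangular (unitriangularFactor A) := by
  refine isLowerUnitriangular_iff.mpr ⟨fun i ↦ ?_, fun i j hij ↦ ?_⟩
  · rw [unitriangularFactor, of_apply, unitriangularFactorEntry, if_neg (lt_irrefl i), if_pos rfl]
  · rw [unitriangularFactor, of_apply, unitriangularFactorEntry, if_pos hij]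

theorem unitriangularFactor_apply_of_lt {i j : ι} (hji : j < i) :
    unitriangularFactor A i j =
      A i j - ∑ k with k < j, unitriangularFactor A i k * unitriangularFactor A j k := by
  simp only [unitriangularFactor, of_apply]
  rw [unitriangularFactorEntry, if_neg hji.not_gt, if_neg hji.ne',
    Finset.sum_subtype _ (p := (· < j)) (by simp)]

variable {A}

theorem IsLowerUnitriangular.eq_unitriangularFactor {M : Matrix ι ι R}
    (hM : IsLowerUnitriangular M)
    (hrec : ∀ i j, j < i → M i j = A i j - ∑ k with k < j, M i k * M j k) :
    M = unitriangularFactor A := by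
  have hF := isLowerUnitriangular_unitriangularFactor A
  suffices columns_eq : ∀ j i, M i j = unitriangularFactor A i j from
    Matrix.ext fun i j ↦ columns_eq j i
  intro j
  induction j using WellFoundedLT.induction with
  | ind j ih =>
    intro i
    rcases lt_trichotomy i j with hij | rfl | hji
    · rw [hM.isLowerTriangular hij, hF.isLowerTriangular hij]
    · rw [hM.apply_self, hF.apply_self]
    · rw [hrec i j hji, unitriangularFactor_apply_of_lt A hji]
      congr 1
      refine Finset.sum_congr rfl fun k hk ↦ ?_
      have hkj : k < j := (Finset.mem_filter.mp hk).2
      rw [ih k hkj, ih k hkj]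

theorem IsLowerUnitriangular.forall_lt_eq_mul_transpose_iff {M : Matrix ι ι R}
    (hM : IsLowerUnitriangular M) :
    (∀ i j, j < i → A i j = (M * Mᵀ) i j) ↔ M = unitriangularFactor A := by
  simp only [hM.mul_transpose_apply, ← sub_eq_iff_eq_add, eq_comm (a := A _ _ - _)]
  refine ⟨hM.eq_unitriangularFactor, ?_⟩
  rintro rfl i j hji
  exact unitriangularFactor_apply_of_lt A hji

end

theorem symmetric_gf2_factorization_unique_general [Fintype ι] [NonAssocCommRing R]
    {A : Matrix ι ι R} (hA : A.IsSymm) :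
    ∃! M : Matrix ι ι R,
      IsLowerUnitriangular M ∧ ∀ i j, i ≠ j → A i j = (M * Mᵀ) i j := by
  have iff_eq_factor {M : Matrix ι ι R} (hM : IsLowerUnitriangular M) :
      (∀ i j, i ≠ j → A i j = (M * Mᵀ) i j) ↔ M = unitriangularFactor A :=
    (forall_ne_apply_eq_iff_forall_lt_of_isSymm hA (transpose_mul M Mᵀ)).trans
      hM.forall_lt_eq_mul_transpose_iff
  have hF := isLowerUnitriangular_unitriangularFactor A
  exact ⟨unitriangularFactor A, ⟨hF, (iff_eq_factor hF).mpr rfl⟩,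
    fun M hM ↦ (iff_eq_factor hM.1).mp hM.2⟩

end

/-- for any symmetric matrix `A` over `GF(2)` there is a *unique*
lower unitriangular `M` with `A_{ij} = (M·Mᵀ)_{ij}` for all `i ≠ j`. -/
theorem symmetric_gf2_factorization_unique (n : ℕ) (A : Matrix (Fin n) (Fin n) (ZMod 2))
    (hA : Aᵀ = A) :
    ∃! M : Matrix (Fin n) (Fin n) (ZMod 2),
      (∀ i, M i i = 1) ∧ (∀ i j, i < j → M i j = 0) ∧
      ∀ i j, i ≠ j → A i j = (M * Mᵀ) i j := by
  simpa only [isLowerUnitriangular_iff, and_assoc] using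
    symmetric_gf2_factorization_unique_general hA
end
end

section
/- Any tableau satisfying the commutativity conditions is generated by some unitary stabilizer circuit: let R₁,…,R_{2n} be elements of P_n, each with phase ±1 (i.e., each of the form ±P₁⊗⋯⊗Pₙ), such that R_i and R_j commute for all i ≠ j except that R_i anticommutes with R_{i+n} for each i ∈ {1,…,n}. Then there exists an element U of the n-qubit Clifford group such that U X_a U⁻¹ = R_a and U Z_a U⁻¹ = R_{n+a} for all a ∈ {1,…,n}, where X_a (resp. Z_a) denotes the element of P_n acting as X (resp. Z) on qubit a and as the identity on all other qubits. -/
open Matrix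

noncomputable section

/-!
For a Pauli operator `P` with `P² = 1`, conjugation by its phase gate `S_P` (acting as `1` and `i`
on the `±1` eigenspaces of `P`) fixes the operators commuting with `P` and sends `Q` to `i Q P` if
`P` and `Q` anticommute. Modulo signs this is a symplectic transvection, and the theorem becomes a
case of Witt's theorem with signs: the transvections act transitively on anticommuting pairs, so
the standard tableau can be moved to the given one a pair at a time, working inside the centralizer
of the rows already matched.

It remains to build `S_P` from the gates. For `P = Z_a` it is the phase gate itself, and if a
Clifford unitary `V` conjugates `P` to `Q` then `S_Q = V S_P V⁻¹`. Hadamard gates, phase gates of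
other Pauli operators and CNOT gates reach in this way every Pauli operator except `-1`, by
induction on the support. The operator `-1` is central, and its phase gate is never needed.
-/

section Anticommute

/-- Two elements anticommute. This is the relation between the two rows of a tableau that are
attached to the same qubit. -/
def Anticommute {A : Type*} [Mul A] [Neg A] (a b : A) : Prop := a * b = -(b * a)

namespace Anticommute

theorem eq {A : Type*} [Mul A] [Neg A] {a b : A} (h : Anticommute a b) : a * b = -(b * a) := h

theorem symm {A : Type*} [Mul A] [InvolutiveNeg A] {a b : A} (h : Anticommute a b) :
    Anticommute b a := by
  rw [Anticommute, h.eq, neg_neg]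

section Semigroup

variable {A : Type*} [Semigroup A] [HasDistribNeg A] {a b c : A}

theorem mul_right (hb : Anticommute a b) (hc : Commute a c) : Anticommute a (b * c) := by
  rw [Anticommute, ← mul_assoc, hb.eq, neg_mul, mul_assoc, hc.eq, mul_assoc]

theorem mul_right_of_commute (hb : Commute a b) (hc : Anticommute a c) :
    Anticommute a (b * c) := by
  rw [Anticommute, ← mul_assoc, hb.eq, mul_assoc, hc.eq, mul_neg, mul_assoc]

theorem commute_mul_right (hb : Anticommute a b) (hc : Anticommute a c) : Commute a (b * c) := by
  rw [Commute, SemiconjBy, ← mul_assoc, hb.eq, neg_mul, mul_assoc, hc.eq, mul_neg, neg_neg,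
    mul_assoc]

end Semigroup

theorem mul_mul_mul_self {A : Type*} [Monoid A] [HasDistribNeg A] {a b : A}
    (h : Anticommute a b) (ha : a * a = 1) (hb : b * b = 1) : a * b * (a * b) = -1 := by
  rw [mul_assoc, ← mul_assoc b, h.symm.eq, neg_mul, mul_neg, mul_assoc a, hb, mul_one, ha]

section Ring

variable {A : Type*} [Ring A] {a b : A}

theorem smul_right {R : Type*} [Monoid R] [DistribMulAction R A] [SMulCommClass R A A]
    [IsScalarTower R A A] (h : Anticommute a b) (c : R) : Anticommute a (c • b) := by
  rw [Anticommute, mul_smul_comm, h.eq, smul_mul_assoc, smul_neg]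

theorem smul_smul {G : Type*} [Monoid G] [MulSemiringAction G A] (h : Anticommute a b) (g : G) :
    Anticommute (g • a) (g • b) := by
  rw [Anticommute, ← smul_mul', h.eq, smul_neg, smul_mul']

theorem not_commute [Nontrivial A] [IsAddTorsionFree A] (h : Anticommute a b) (ha : a * a = 1)
    (hb : b * b = 1) : ¬Commute a b := by
  intro hc
  have hab : a * b = 0 := self_eq_neg.mp (h.eq.trans (congrArg _ hc.eq.symm))
  have : (1 : A) = 0 := by rw [← hb, ← one_mul b, ← ha, mul_assoc a, hab, mul_zero, zero_mul]
  exact one_ne_zero this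

end Ring

end Anticommute

theorem commute_smul_smul {G M : Type*} [Monoid G] [Monoid M] [MulDistribMulAction G M] {a b : M}
    (h : Commute a b) (g : G) : Commute (g • a) (g • b) :=
  h.map (MulDistribMulAction.toMonoidHom M g)

end Anticommute

section PhaseGate

open ConjAct

variable {A : Type*} [Ring A] [Algebra ℂ A] {P Q : A}

/-- The phase gate of an involution `P`: the operator acting as `1` on the `+1` eigenspace of `P`
and as `i` on its `-1` eigenspace. For `P = Z` this is the usual phase gate. -/
def phaseGateOf (P : A) : A :=
  ((1 + Complex.I) / 2) • (1 : A) + ((1 - Complex.I) / 2) • P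

theorem phaseGateOf_one : phaseGateOf (1 : A) = 1 := by
  rw [phaseGateOf, ← add_smul]
  ring_nf
  exact one_smul ℂ 1

theorem phaseGateOf_mul_self (hP : P * P = 1) : phaseGateOf P * phaseGateOf P = P := by
  simp only [phaseGateOf, add_mul, mul_add, smul_mul_smul_comm, one_mul, mul_one, hP]
  match_scalars <;> ring_nf <;> simp only [Complex.I_sq] <;> ring

/-- The phase gate of an involution as a unit, with inverse its cube. -/
def phaseUnit (P : A) (hP : P * P = 1) : Aˣ where
  val := phaseGateOf P
  inv := phaseGateOf P * phaseGateOf P * phaseGateOf P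
  val_inv := by
    rw [mul_assoc, ← mul_assoc, phaseGateOf_mul_self hP, hP]
  inv_val := by
    rw [mul_assoc, phaseGateOf_mul_self hP, hP]

theorem phaseGateOf_smul (g : ConjAct Aˣ) (P : A) : phaseGateOf (g • P) = g • phaseGateOf P := by
  simp only [phaseGateOf, smul_add, smul_comm g, smul_one]

theorem toConjAct_smul_eq_iff_semiconjBy {M : Type*} [Monoid M] {u : Mˣ} {a b : M} :
    toConjAct u • a = b ↔ SemiconjBy (u : M) a b := by
  rw [units_smul_def, ofConjAct_toConjAct, Units.mul_inv_eq_iff_eq_mul, SemiconjBy]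

theorem phaseUnit_smul_of_commute (hP : P * P = 1) (h : Commute P Q) :
    toConjAct (phaseUnit P hP) • Q = Q :=
  toConjAct_smul_eq_iff_semiconjBy.mpr
    (((Commute.one_left Q).smul_left _).add_left (h.smul_left _))

theorem phaseUnit_smul_of_anticommute (hP : P * P = 1) (h : Anticommute P Q) :
    toConjAct (phaseUnit P hP) • Q = Complex.I • (Q * P) := by
  rw [toConjAct_smul_eq_iff_semiconjBy, SemiconjBy]
  have hQPP : Q * P * P = Q := by rw [mul_assoc, hP, mul_one]
  simp only [phaseUnit, phaseGateOf, add_mul, mul_add, smul_mul_assoc, mul_smul_comm, one_mul,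
    mul_one, h.eq, hQPP]
  match_scalars <;> ring_nf <;> simp only [Complex.I_sq] <;> ring

/-- `P` is an involution whose phase gate can be built from the operators in `C`. -/
structure HasPhaseGate (C : Submonoid A) (P : A) : Prop where
  mul_self : P * P = 1
  mem : phaseGateOf P ∈ C

namespace HasPhaseGate

variable {C : Submonoid A}

theorem one : HasPhaseGate C (1 : A) where
  mul_self := one_mul 1
  mem := by
    rw [phaseGateOf_one]
    exact one_mem C

theorem phaseUnit_mem_units (h : HasPhaseGate C P) : phaseUnit P h.mul_self ∈ C.units :=
  ⟨h.mem, mul_mem (mul_mem h.mem h.mem) h.mem⟩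

theorem smul (h : HasPhaseGate C P) {u : Aˣ} (hu : u ∈ C.units) :
    HasPhaseGate C (toConjAct u • P) where
  mul_self := by rw [← smul_mul', h.mul_self, smul_one]
  mem := by
    rw [phaseGateOf_smul]
    exact mul_mem (mul_mem hu.1 h.mem) hu.2

theorem of_mul_eq_mul (h : HasPhaseGate C P) {V : A} (hV : V ∈ C) (hVV : V * V = 1)
    (hVP : V * P = Q * V) : HasPhaseGate C Q := by
  let u : Aˣ := ⟨V, V, hVV, hVV⟩
  have hu : u ∈ C.units := ⟨hV, hV⟩
  have huP : toConjAct u • P = Q := toConjAct_smul_eq_iff_semiconjBy.mpr hVP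
  exact huP ▸ h.smul hu

theorem I_smul_mul (hP : HasPhaseGate C P) (hQ : HasPhaseGate C Q) (h : Anticommute P Q) :
    HasPhaseGate C (Complex.I • (P * Q)) := by
  rw [← phaseUnit_smul_of_anticommute hQ.mul_self h.symm]
  exact hP.smul hQ.phaseUnit_mem_units

theorem neg (hP : HasPhaseGate C P) (hQ : HasPhaseGate C Q) (h : Anticommute P Q) :
    HasPhaseGate C (-P) := by
  have hanti : Anticommute Q (Complex.I • (Q * P)) :=
    (Anticommute.mul_right_of_commute (Commute.refl Q) h.symm).smul_right _
  have := hQ.I_smul_mul (hQ.I_smul_mul hP h.symm) hanti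
  rwa [mul_smul_comm, smul_smul, Complex.I_mul_I, ← mul_assoc, hQ.mul_self, one_mul,
    neg_one_smul] at this

end HasPhaseGate

end PhaseGate

section Tableau

variable {A ι : Type*} [Mul A] [Neg A] {S : Set A} {x z : ι → A}

/-- A tableau in `S`: destabilizer rows `x` and stabilizer rows `z` that commute pairwise, except
that `x a` anticommutes with `z a`. -/
structure IsTableau (S : Set A) (x z : ι → A) : Prop where
  x_mem : ∀ a, x a ∈ S
  z_mem : ∀ a, z a ∈ S
  commute_x : ∀ a b, Commute (x a) (x b)
  commute_z : ∀ a b, Commute (z a) (z b)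
  commute_xz : ∀ a b, a ≠ b → Commute (x a) (z b)
  anticommute : ∀ a, Anticommute (x a) (z a)

theorem IsTableau.x_mem_centralizer (h : IsTableau S x z) {s : Set ι} {k : ι} (hk : k ∉ s) :
    x k ∈ (x '' s ∪ z '' s).centralizer := by
  rintro _ (⟨a, -, rfl⟩ | ⟨a, ha, rfl⟩)
  · exact h.commute_x a k
  · exact (h.commute_xz k a (ne_of_mem_of_not_mem ha hk).symm).symm

theorem IsTableau.z_mem_centralizer (h : IsTableau S x z) {s : Set ι} {k : ι} (hk : k ∉ s) :
    z k ∈ (x '' s ∪ z '' s).centralizer := by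
  rintro _ (⟨a, ha, rfl⟩ | ⟨a, -, rfl⟩)
  · exact h.commute_xz a k (ne_of_mem_of_not_mem ha hk)
  · exact h.commute_z a k

end Tableau

section PauliSystem

open ConjAct

variable {A : Type*} [Ring A] [Algebra ℂ A] {S : Set A} {P Q R : A}

/-- A set of involutions behaving like the Pauli operators with phase `±1`: any two commute or
anticommute, and the set contains their product up to the factor `i` that makes it an
involution. -/
structure IsPauliSystem (S : Set A) : Prop where
  mul_self : ∀ P ∈ S, P * P = 1
  commute_or_anticommute : ∀ P ∈ S, ∀ Q ∈ S, Commute P Q ∨ Anticommute P Q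
  mul_mem_of_commute : ∀ P ∈ S, ∀ Q ∈ S, Commute P Q → P * Q ∈ S
  I_smul_mul_mem_of_anticommute : ∀ P ∈ S, ∀ Q ∈ S, Anticommute P Q → Complex.I • (P * Q) ∈ S

theorem IsPauliSystem.inter_centralizer (hS : IsPauliSystem S) (F : Set A) :
    IsPauliSystem (S ∩ F.centralizer) where
  mul_self P hP := hS.mul_self P hP.1
  commute_or_anticommute P hP Q hQ := hS.commute_or_anticommute P hP.1 Q hQ.1
  mul_mem_of_commute P hP Q hQ h :=
    ⟨hS.mul_mem_of_commute P hP.1 Q hQ.1 h, Set.mul_mem_centralizer hP.2 hQ.2⟩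
  I_smul_mul_mem_of_anticommute P hP Q hQ h :=
    ⟨hS.I_smul_mul_mem_of_anticommute P hP.1 Q hQ.1 h,
      Set.smul_mem_centralizer _ (Set.mul_mem_centralizer hP.2 hQ.2)⟩

/-- The conjugations generated by the phase gates of the noncentral elements of `S`. -/
def phaseConjugations (S : Set A) : Submonoid (ConjAct Aˣ) :=
  Submonoid.closure {g | ∃ P ∈ S, (∃ Q ∈ S, Anticommute P Q) ∧
    ∃ hP : P * P = 1, g = toConjAct (phaseUnit P hP)}

theorem phaseUnit_mem_phaseConjugations (hP : P ∈ S) (hQ : Q ∈ S) (h : Anticommute P Q)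
    (hPP : P * P = 1) : toConjAct (phaseUnit P hPP) ∈ phaseConjugations S :=
  Submonoid.subset_closure ⟨P, hP, ⟨Q, hQ, h⟩, hPP, rfl⟩

theorem phaseConjugations_mono {T : Set A} (hST : S ⊆ T) :
    phaseConjugations S ≤ phaseConjugations T := by
  refine Submonoid.closure_mono ?_
  rintro g ⟨P, hP, ⟨Q, hQ, h⟩, hPP, rfl⟩
  exact ⟨P, hST hP, ⟨Q, hST hQ, h⟩, hPP, rfl⟩

theorem smul_eq_of_mem_phaseConjugations {g : ConjAct Aˣ} (hg : g ∈ phaseConjugations S)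
    (hQ : Q ∈ S.centralizer) : g • Q = Q := by
  suffices phaseConjugations S ≤ MulAction.stabilizerSubmonoid (ConjAct Aˣ) Q from this hg
  rw [phaseConjugations, Submonoid.closure_le]
  rintro _ ⟨P, hP, -, hPP, rfl⟩
  exact phaseUnit_smul_of_commute hPP (hQ P hP)

theorem IsPauliSystem.smul_mem (hS : IsPauliSystem S) {g : ConjAct Aˣ}
    (hg : g ∈ phaseConjugations S) (hQ : Q ∈ S) : g • Q ∈ S := by
  induction hg using Submonoid.closure_induction generalizing Q with
  | mem g hg =>
    obtain ⟨P, hP, -, hPP, rfl⟩ := hg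
    rcases hS.commute_or_anticommute P hP Q hQ with h | h
    · rwa [phaseUnit_smul_of_commute hPP h]
    · rw [phaseUnit_smul_of_anticommute hPP h]
      exact hS.I_smul_mul_mem_of_anticommute Q hQ P hP h.symm
  | one => rwa [one_smul]
  | mul g k _ _ hg hk => rw [mul_smul]; exact hg (hk hQ)

/-- The phase gate of `i Q P` moves `P` to `Q`. -/
theorem IsPauliSystem.exists_smul_eq_of_anticommute (hS : IsPauliSystem S) (hP : P ∈ S)
    (hQ : Q ∈ S) (h : Anticommute P Q) : ∃ g ∈ phaseConjugations S, g • P = Q ∧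
      ∀ T, Anticommute T P → Anticommute T Q → g • T = T := by
  have hmem := hS.I_smul_mul_mem_of_anticommute Q hQ P hP h.symm
  have hanti : Anticommute (Complex.I • (Q * P)) P :=
    ((h.mul_right (Commute.refl P)).smul_right _).symm
  have hsq := hS.mul_self _ hmem
  refine ⟨_, phaseUnit_mem_phaseConjugations hmem hP hanti hsq, ?_, fun T hTP hTQ => ?_⟩
  · rw [phaseUnit_smul_of_anticommute hsq hanti, mul_smul_comm, smul_smul, Complex.I_mul_I,
      ← mul_assoc, h.eq, neg_mul, mul_assoc, hS.mul_self P hP, mul_one, neg_smul_neg, one_smul]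
  · exact phaseUnit_smul_of_commute hsq ((hTQ.commute_mul_right hTP).smul_right _).symm

theorem IsPauliSystem.exists_anticommute_both (hS : IsPauliSystem S) {P' Q' : A} (hP : P ∈ S)
    (hQ : Q ∈ S) (hP' : P' ∈ S) (hQ' : Q' ∈ S) (h : Anticommute P Q) (h' : Anticommute P' Q') :
    ∃ R ∈ S, Anticommute P R ∧ Anticommute P' R := by
  rcases hS.commute_or_anticommute P' hP' Q hQ with hP'Q | hP'Q
  swap
  · exact ⟨Q, hQ, h, hP'Q⟩
  rcases hS.commute_or_anticommute P hP Q' hQ' with hPQ' | hPQ'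
  swap
  · exact ⟨Q', hQ', hPQ', h'⟩
  have hPR : Anticommute P (Q * Q') := h.mul_right hPQ'
  have hP'R : Anticommute P' (Q * Q') := Anticommute.mul_right_of_commute hP'Q h'
  rcases hS.commute_or_anticommute Q hQ Q' hQ' with hQQ' | hQQ'
  · exact ⟨_, hS.mul_mem_of_commute Q hQ Q' hQ' hQQ', hPR, hP'R⟩
  · exact ⟨_, hS.I_smul_mul_mem_of_anticommute Q hQ Q' hQ' hQQ', hPR.smul_right _,
      hP'R.smul_right _⟩

theorem IsPauliSystem.exists_smul_eq (hS : IsPauliSystem S) {P' Q' : A} (hP : P ∈ S)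
    (hQ : Q ∈ S) (hP' : P' ∈ S) (hQ' : Q' ∈ S) (h : Anticommute P Q) (h' : Anticommute P' Q') :
    ∃ g ∈ phaseConjugations S, g • P = P' := by
  obtain ⟨R, hR, hPR, hP'R⟩ := hS.exists_anticommute_both hP hQ hP' hQ' h h'
  obtain ⟨g, hg, hgP, -⟩ := hS.exists_smul_eq_of_anticommute hP hR hPR
  obtain ⟨k, hk, hkR, -⟩ := hS.exists_smul_eq_of_anticommute hR hP' hP'R.symm
  exact ⟨k * g, mul_mem hk hg, by rw [mul_smul, hgP, hkR]⟩

theorem IsPauliSystem.exists_smul_eq_fixing (hS : IsPauliSystem S) (hP : P ∈ S) (hQ : Q ∈ S)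
    (hR : R ∈ S) (hPQ : Anticommute P Q) (hPR : Anticommute P R) :
    ∃ g ∈ phaseConjugations S, g • P = P ∧ g • Q = R := by
  rcases hS.commute_or_anticommute Q hQ R hR with hQR | hQR
  · -- `Q` is moved to `R` through `T = i P Q`, which anticommutes with `P`, `Q` and `R`.
    have hT := hS.I_smul_mul_mem_of_anticommute P hP Q hQ hPQ
    have hPT : Anticommute P (Complex.I • (P * Q)) :=
      (Anticommute.mul_right_of_commute (Commute.refl P) hPQ).smul_right _
    have hQT : Anticommute Q (Complex.I • (P * Q)) :=
      (hPQ.symm.mul_right (Commute.refl Q)).smul_right _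
    have hRT : Anticommute R (Complex.I • (P * Q)) :=
      (hPR.symm.mul_right hQR.symm).smul_right _
    obtain ⟨g, hg, hgQ, hgP⟩ := hS.exists_smul_eq_of_anticommute hQ hT hQT
    obtain ⟨k, hk, hkT, hkP⟩ := hS.exists_smul_eq_of_anticommute hT hR hRT.symm
    exact ⟨k * g, mul_mem hk hg, by rw [mul_smul, hgP P hPQ hPT, hkP P hPT hPR],
      by rw [mul_smul, hgQ, hkT]⟩
  · obtain ⟨g, hg, hgQ, hgP⟩ := hS.exists_smul_eq_of_anticommute hQ hR hQR
    exact ⟨g, hg, hgP P hPQ hPR, hgQ⟩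

theorem IsPauliSystem.exists_smul_pair_eq (hS : IsPauliSystem S) {P' Q' : A} (hP : P ∈ S)
    (hQ : Q ∈ S) (hP' : P' ∈ S) (hQ' : Q' ∈ S) (h : Anticommute P Q) (h' : Anticommute P' Q') :
    ∃ g ∈ phaseConjugations S, g • P = P' ∧ g • Q = Q' := by
  obtain ⟨g, hg, rfl⟩ := hS.exists_smul_eq hP hQ hP' hQ' h h'
  obtain ⟨k, hk, hkP, hkQ⟩ :=
    hS.exists_smul_eq_fixing hP' (hS.smul_mem hg hQ) hQ' (h.smul_smul g) h'
  exact ⟨k * g, mul_mem hk hg, by rw [mul_smul, hkP], by rw [mul_smul, hkQ]⟩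

variable {ι : Type*} {x z x' z' : ι → A}

theorem IsTableau.smul (h : IsTableau S x z) (hS : IsPauliSystem S) {g : ConjAct Aˣ}
    (hg : g ∈ phaseConjugations S) : IsTableau S (g • x) (g • z) where
  x_mem a := hS.smul_mem hg (h.x_mem a)
  z_mem a := hS.smul_mem hg (h.z_mem a)
  commute_x a b := commute_smul_smul (h.commute_x a b) g
  commute_z a b := commute_smul_smul (h.commute_z a b) g
  commute_xz a b hab := commute_smul_smul (h.commute_xz a b hab) g
  anticommute a := (h.anticommute a).smul_smul g

/-- If two tableaux agree on `s`, the pair at `k ∉ s` can be matched inside the centralizer of the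
rows indexed by `s`, hence without moving those rows. -/
theorem IsTableau.exists_smul_eq_insert (hS : IsPauliSystem S) (h : IsTableau S x z)
    (h' : IsTableau S x' z') {s : Set ι} (hx : Set.EqOn x x' s) (hz : Set.EqOn z z' s) {k : ι}
    (hk : k ∉ s) : ∃ g ∈ phaseConjugations S,
      Set.EqOn (g • x) x' (insert k s) ∧ Set.EqOn (g • z) z' (insert k s) := by
  set F := x '' s ∪ z '' s with hF
  have hF' : F = x' '' s ∪ z' '' s := by rw [hF, hx.image_eq, hz.image_eq]
  obtain ⟨g, hg, hgx, hgz⟩ := (hS.inter_centralizer F).exists_smul_pair_eq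
    ⟨h.x_mem k, h.x_mem_centralizer hk⟩ ⟨h.z_mem k, h.z_mem_centralizer hk⟩
    ⟨h'.x_mem k, hF' ▸ h'.x_mem_centralizer hk⟩ ⟨h'.z_mem k, hF' ▸ h'.z_mem_centralizer hk⟩
    (h.anticommute k) (h'.anticommute k)
  have hfix : ∀ T ∈ F, g • T = T := fun T hT =>
    smul_eq_of_mem_phaseConjugations hg fun P hP => (hP.2 T hT).symm
  refine ⟨g, phaseConjugations_mono Set.inter_subset_left hg,
    Set.forall_mem_insert.mpr ⟨hgx, fun a ha => ?_⟩,
    Set.forall_mem_insert.mpr ⟨hgz, fun a ha => ?_⟩⟩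
  · exact (hfix _ (Or.inl ⟨a, ha, rfl⟩)).trans (hx ha)
  · exact (hfix _ (Or.inr ⟨a, ha, rfl⟩)).trans (hz ha)

theorem IsTableau.exists_smul_eq [Finite ι] (hS : IsPauliSystem S) (h : IsTableau S x z)
    (h' : IsTableau S x' z') : ∃ g ∈ phaseConjugations S, g • x = x' ∧ g • z = z' := by
  suffices ∀ s : Set ι, s.Finite →
      ∃ g ∈ phaseConjugations S, Set.EqOn (g • x) x' s ∧ Set.EqOn (g • z) z' s by
    simpa only [Set.eqOn_univ] using this Set.univ Set.finite_univ
  intro s hs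
  induction s, hs using Set.Finite.induction_on with
  | empty => exact ⟨1, one_mem _, Set.eqOn_empty _ _, Set.eqOn_empty _ _⟩
  | insert hk _ ih =>
    obtain ⟨g, hg, hgx, hgz⟩ := ih
    obtain ⟨k, hk, hkx, hkz⟩ := (h.smul hS hg).exists_smul_eq_insert hS h' hgx hgz hk
    exact ⟨k * g, mul_mem hk hg, by rwa [mul_smul], by rwa [mul_smul]⟩

end PauliSystem

section PauliMatrix

variable {M N : Matrix (Fin 2) (Fin 2) ℂ}

/-- A one-qubit Pauli matrix, with phase `1`. -/
def IsPauli (M : Matrix (Fin 2) (Fin 2) ℂ) : Prop := M = 1 ∨ M = pX ∨ M = pY ∨ M = pZ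

theorem isPauli_one : IsPauli 1 := Or.inl rfl

theorem isPauli_pX : IsPauli pX := Or.inr (Or.inl rfl)

theorem isPauli_pY : IsPauli pY := Or.inr (Or.inr (Or.inl rfl))

theorem isPauli_pZ : IsPauli pZ := Or.inr (Or.inr (Or.inr rfl))

theorem pX_mul_pX : pX * pX = 1 := by
  simp [pX, Matrix.one_fin_two]

theorem pY_mul_pY : pY * pY = 1 := by
  simp [pY, Matrix.one_fin_two]

theorem pZ_mul_pZ : pZ * pZ = 1 := by
  simp [pZ, Matrix.one_fin_two]

theorem pX_mul_pY : pX * pY = Complex.I • pZ := by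
  simp [pX, pY, pZ]

theorem pY_mul_pX : pY * pX = (-Complex.I) • pZ := by
  simp [pX, pY, pZ]

theorem pY_mul_pZ : pY * pZ = Complex.I • pX := by
  simp [pX, pY, pZ]

theorem pZ_mul_pY : pZ * pY = (-Complex.I) • pX := by
  simp [pX, pY, pZ]

theorem pZ_mul_pX : pZ * pX = Complex.I • pY := by
  simp [pX, pY, pZ]

theorem pX_mul_pZ : pX * pZ = (-Complex.I) • pY := by
  simp [pX, pY, pZ]

theorem pZ_ne_one : pZ ≠ 1 := fun h => by
  simpa [pZ, neg_eq_self] using congrFun₂ h 1 1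

theorem anticommute_pX_pY : Anticommute pX pY := by
  rw [Anticommute, pX_mul_pY, pY_mul_pX, neg_smul, neg_neg]

theorem anticommute_pY_pZ : Anticommute pY pZ := by
  rw [Anticommute, pY_mul_pZ, pZ_mul_pY, neg_smul, neg_neg]

theorem anticommute_pZ_pX : Anticommute pZ pX := by
  rw [Anticommute, pZ_mul_pX, pX_mul_pZ, neg_smul, neg_neg]

theorem IsPauli.mul_self (hM : IsPauli M) : M * M = 1 := by
  rcases hM with rfl | rfl | rfl | rfl
  exacts [one_mul 1, pX_mul_pX, pY_mul_pY, pZ_mul_pZ]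

theorem IsPauli.anticommute_of_ne (hM : IsPauli M) (hN : IsPauli N) (hM1 : M ≠ 1) (hN1 : N ≠ 1)
    (hMN : M ≠ N) : Anticommute M N := by
  rcases hM with rfl | rfl | rfl | rfl <;> rcases hN with rfl | rfl | rfl | rfl <;>
    first
    | contradiction
    | exact anticommute_pX_pY
    | exact anticommute_pX_pY.symm
    | exact anticommute_pY_pZ
    | exact anticommute_pY_pZ.symm
    | exact anticommute_pZ_pX
    | exact anticommute_pZ_pX.symm

theorem IsPauli.exists_anticommute (hM : IsPauli M) (hM1 : M ≠ 1) :
    ∃ R, IsPauli R ∧ Anticommute M R := by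
  rcases hM with rfl | rfl | rfl | rfl
  · contradiction
  · exact ⟨pY, isPauli_pY, anticommute_pX_pY⟩
  · exact ⟨pZ, isPauli_pZ, anticommute_pY_pZ⟩
  · exact ⟨pX, isPauli_pX, anticommute_pZ_pX⟩

theorem IsPauli.exists_mul_eq_smul_mul (hM : IsPauli M) (hN : IsPauli N) :
    ∃ ε : ℂ, ε * ε = 1 ∧ M * N = ε • (N * M) := by
  by_cases hM1 : M = 1
  · exact ⟨1, one_mul 1, by rw [hM1, one_mul, mul_one, one_smul]⟩
  by_cases hN1 : N = 1
  · exact ⟨1, one_mul 1, by rw [hN1, one_mul, mul_one, one_smul]⟩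
  by_cases hMN : M = N
  · exact ⟨1, one_mul 1, by rw [hMN, one_smul]⟩
  · exact ⟨-1, by norm_num, by rw [(hM.anticommute_of_ne hN hM1 hN1 hMN).eq, neg_one_smul]⟩

theorem IsPauli.exists_mul_eq_smul (hM : IsPauli M) (hN : IsPauli N) :
    ∃ c : ℂ, ∃ R, IsPauli R ∧ M * N = c • R := by
  rcases hM with rfl | rfl | rfl | rfl
  · exact ⟨1, N, hN, by rw [one_mul, one_smul]⟩
  · rcases hN with rfl | rfl | rfl | rfl
    · exact ⟨1, pX, isPauli_pX, by rw [mul_one, one_smul]⟩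
    · exact ⟨1, 1, isPauli_one, by rw [pX_mul_pX, one_smul]⟩
    · exact ⟨_, pZ, isPauli_pZ, pX_mul_pY⟩
    · exact ⟨_, pY, isPauli_pY, pX_mul_pZ⟩
  · rcases hN with rfl | rfl | rfl | rfl
    · exact ⟨1, pY, isPauli_pY, by rw [mul_one, one_smul]⟩
    · exact ⟨_, pZ, isPauli_pZ, pY_mul_pX⟩
    · exact ⟨1, 1, isPauli_one, by rw [pY_mul_pY, one_smul]⟩
    · exact ⟨_, pX, isPauli_pX, pY_mul_pZ⟩
  · rcases hN with rfl | rfl | rfl | rfl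
    · exact ⟨1, pZ, isPauli_pZ, by rw [mul_one, one_smul]⟩
    · exact ⟨_, pY, isPauli_pY, pZ_mul_pX⟩
    · exact ⟨_, pX, isPauli_pX, pZ_mul_pY⟩
    · exact ⟨1, 1, isPauli_one, by rw [pZ_mul_pZ, one_smul]⟩

end PauliMatrix

section Kron

variable {n : ℕ} {a b : Fin n} {M N : Matrix (Fin 2) (Fin 2) ℂ}
  {Q : Fin n → Matrix (Fin 2) (Fin 2) ℂ}

theorem kron_mul (P Q : Fin n → Matrix (Fin 2) (Fin 2) ℂ) :
    kron P * kron Q = kron (P * Q) := by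
  ext x y
  simp only [kron, Matrix.mul_apply, Matrix.of_apply, Pi.mul_apply, ← Finset.prod_mul_distrib]
  rw [Finset.prod_univ_sum, Fintype.piFinset_univ]

theorem kron_one : kron (1 : Fin n → Matrix (Fin 2) (Fin 2) ℂ) = 1 := by
  ext x y
  simp only [kron, Matrix.of_apply, Pi.one_apply, Matrix.one_apply, Finset.prod_ite_zero,
    Finset.prod_const_one, Finset.mem_univ, true_implies, funext_iff]

theorem kron_smul (c : Fin n → ℂ) (P : Fin n → Matrix (Fin 2) (Fin 2) ℂ) :
    kron (fun j => c j • P j) = (∏ j, c j) • kron P := by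
  ext x y
  simp only [kron, Matrix.of_apply, Matrix.smul_apply, smul_eq_mul, Finset.prod_mul_distrib]

theorem kron_update_apply (Q : Fin n → Matrix (Fin 2) (Fin 2) ℂ) (a : Fin n)
    (M : Matrix (Fin 2) (Fin 2) ℂ) (x y : Fin n → Fin 2) :
    kron (Function.update Q a M) x y =
      M (x a) (y a) * ∏ j ∈ Finset.univ.erase a, Q j (x j) (y j) := by
  rw [kron, Matrix.of_apply, ← Finset.mul_prod_erase _ _ (Finset.mem_univ a),
    Function.update_self]
  refine congrArg _ (Finset.prod_congr rfl fun j hj => ?_)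
  rw [Function.update_of_ne (Finset.ne_of_mem_erase hj)]

theorem kron_update_add (Q : Fin n → Matrix (Fin 2) (Fin 2) ℂ) (a : Fin n)
    (M N : Matrix (Fin 2) (Fin 2) ℂ) :
    kron (Function.update Q a (M + N)) =
      kron (Function.update Q a M) + kron (Function.update Q a N) := by
  ext x y
  simp only [kron_update_apply, Matrix.add_apply, add_mul]

theorem kron_update_smul (Q : Fin n → Matrix (Fin 2) (Fin 2) ℂ) (a : Fin n) (c : ℂ)
    (M : Matrix (Fin 2) (Fin 2) ℂ) :
    kron (Function.update Q a (c • M)) = c • kron (Function.update Q a M) := by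
  ext x y
  simp only [kron_update_apply, Matrix.smul_apply, smul_eq_mul, mul_assoc]

theorem onQubit_eq_kron_update (a : Fin n) (M : Matrix (Fin 2) (Fin 2) ℂ) :
    onQubit a M = kron (Function.update 1 a M) :=
  congrArg kron (funext fun j => (Function.update_apply (1 : Fin n → _) a M j).symm)

theorem kron_eq_onQubit (h : ∀ b, b ≠ a → Q b = 1) : kron Q = onQubit a (Q a) := by
  refine congrArg kron (funext fun b => ?_)
  split_ifs with hba
  exacts [congrArg Q hba, h b hba]

theorem onQubit_one (a : Fin n) : onQubit a 1 = 1 := by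
  rw [onQubit_eq_kron_update, ← kron_one]
  exact congrArg kron (Function.update_eq_self a 1)

theorem onQubit_smul (a : Fin n) (c : ℂ) (M : Matrix (Fin 2) (Fin 2) ℂ) :
    onQubit a (c • M) = c • onQubit a M := by
  simp only [onQubit_eq_kron_update, kron_update_smul]

theorem onQubit_phaseGateOf (a : Fin n) (M : Matrix (Fin 2) (Fin 2) ℂ) :
    onQubit a (phaseGateOf M) = phaseGateOf (onQubit a M) := by
  rw [phaseGateOf, phaseGateOf, ← onQubit_one a]
  simp only [onQubit_eq_kron_update, kron_update_add, kron_update_smul]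

theorem kron_mul_onQubit (Q : Fin n → Matrix (Fin 2) (Fin 2) ℂ) (a : Fin n)
    (M : Matrix (Fin 2) (Fin 2) ℂ) :
    kron Q * onQubit a M = kron (Function.update Q a (Q a * M)) := by
  conv_lhs => rw [← Function.update_eq_self a Q]
  rw [onQubit_eq_kron_update, kron_mul, ← Function.update_mul, mul_one]

theorem onQubit_mul_kron (Q : Fin n → Matrix (Fin 2) (Fin 2) ℂ) (a : Fin n)
    (M : Matrix (Fin 2) (Fin 2) ℂ) :
    onQubit a M * kron Q = kron (Function.update Q a (M * Q a)) := by
  conv_lhs => rw [← Function.update_eq_self a Q]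
  rw [onQubit_eq_kron_update, kron_mul, ← Function.update_mul, one_mul]

theorem onQubit_mul_onQubit (a : Fin n) (M N : Matrix (Fin 2) (Fin 2) ℂ) :
    onQubit a M * onQubit a N = onQubit a (M * N) := by
  rw [onQubit_eq_kron_update a M, kron_mul_onQubit, Function.update_idem, Function.update_self,
    ← onQubit_eq_kron_update]

theorem commute_onQubit_of_ne (h : a ≠ b) (M N : Matrix (Fin 2) (Fin 2) ℂ) :
    Commute (onQubit a M) (onQubit b N) := by
  rw [Commute, SemiconjBy, onQubit_eq_kron_update a M, kron_mul_onQubit, onQubit_mul_kron,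
    Function.update_of_ne h.symm, Pi.one_apply, mul_one, one_mul]

theorem Anticommute.onQubit_kron (h : Anticommute M (Q a)) :
    Anticommute (onQubit a M) (kron Q) := by
  rw [Anticommute, onQubit_mul_kron, kron_mul_onQubit, h.eq, ← neg_one_smul ℂ (Q a * M),
    kron_update_smul, neg_one_smul]

theorem Anticommute.onQubit (h : Anticommute M N) (a : Fin n) :
    Anticommute (onQubit a M) (onQubit a N) := by
  refine Anticommute.onQubit_kron ?_
  rwa [if_pos rfl]

end Kron

section RealPauli

variable {n : ℕ} {P P' : QMat n} {Q : Fin n → Matrix (Fin 2) (Fin 2) ℂ}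

theorem isRealPauli_onQubit (a : Fin n) {M : Matrix (Fin 2) (Fin 2) ℂ} (hM : IsPauli M) :
    IsRealPauli n (onQubit a M) := by
  refine ⟨1, Or.inl rfl, _, fun j => ?_, (one_smul ℂ _).symm⟩
  split_ifs
  exacts [hM, isPauli_one]

theorem kron_mul_self (hQ : ∀ j, IsPauli (Q j)) : kron Q * kron Q = 1 := by
  rw [kron_mul, ← kron_one]
  exact congrArg kron (funext fun j => (hQ j).mul_self)

theorem IsRealPauli.mul_self (hP : IsRealPauli n P) : P * P = 1 := by
  obtain ⟨ε, hε, Q, hQ, rfl⟩ := hP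
  rw [smul_mul_smul_comm, kron_mul_self hQ, mul_self_eq_one_iff.mpr hε, one_smul]

theorem isRealPauli_smul_kron {c : ℂ} (hQ : ∀ j, IsPauli (Q j))
    (h : (c • kron Q) * (c • kron Q) = 1) : IsRealPauli n (c • kron Q) := by
  rw [smul_mul_smul_comm, kron_mul_self hQ] at h
  have hc : c * c = 1 := smul_left_injective ℂ (one_ne_zero (α := QMat n)) (by simpa using h)
  exact ⟨c, mul_self_eq_one_iff.mp hc, Q, hQ, rfl⟩

/-- A multiple of a product of Pauli operators has phase `±1` as soon as it is an involution. -/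
theorem IsRealPauli.smul_mul (hP : IsRealPauli n P) (hP' : IsRealPauli n P') {c : ℂ}
    (h : (c • (P * P')) * (c • (P * P')) = 1) : IsRealPauli n (c • (P * P')) := by
  obtain ⟨ε, -, Q, hQ, rfl⟩ := hP
  obtain ⟨ε', -, Q', hQ', rfl⟩ := hP'
  choose d R hR hQQ' using fun j => IsPauli.exists_mul_eq_smul (hQ j) (hQ' j)
  have hmul : kron Q * kron Q' = (∏ j, d j) • kron R := by
    rw [kron_mul, ← kron_smul]
    exact congrArg kron (funext hQQ')
  rw [smul_mul_smul_comm ε, hmul, smul_smul, smul_smul] at h ⊢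
  exact isRealPauli_smul_kron hR h

theorem IsRealPauli.commute_or_anticommute (hP : IsRealPauli n P) (hP' : IsRealPauli n P') :
    Commute P P' ∨ Anticommute P P' := by
  obtain ⟨ε, -, Q, hQ, rfl⟩ := hP
  obtain ⟨ε', -, Q', hQ', rfl⟩ := hP'
  choose s hs hQQ' using fun j => IsPauli.exists_mul_eq_smul_mul (hQ j) (hQ' j)
  have hmul : kron Q * kron Q' = (∏ j, s j) • (kron Q' * kron Q) := by
    rw [kron_mul, kron_mul, ← kron_smul]
    exact congrArg kron (funext hQQ')
  have hprod : (∏ j, s j) * ∏ j, s j = 1 := by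
    rw [← Finset.prod_mul_distrib]
    exact Finset.prod_eq_one fun j _ => hs j
  rcases mul_self_eq_one_iff.mp hprod with h | h
  · have hcomm : Commute (kron Q) (kron Q') := by rwa [h, one_smul] at hmul
    exact Or.inl ((hcomm.smul_left ε).smul_right ε')
  · have hanti : Anticommute (kron Q) (kron Q') := by rwa [h, neg_one_smul] at hmul
    exact Or.inr (((hanti.smul_right ε').symm.smul_right ε).symm)

theorem isPauliSystem_isRealPauli (n : ℕ) : IsPauliSystem {P | IsRealPauli n P} where
  mul_self _ hP := hP.mul_self
  commute_or_anticommute _ hP _ hP' := hP.commute_or_anticommute hP'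
  mul_mem_of_commute P hP P' hP' h := by
    rw [← one_smul ℂ (P * P')]
    refine hP.smul_mul hP' ?_
    rw [one_smul, h.symm.mul_mul_mul_comm, hP.mul_self, hP'.mul_self, one_mul]
  I_smul_mul_mem_of_anticommute P hP P' hP' h := by
    refine hP.smul_mul hP' ?_
    rw [smul_mul_smul_comm, h.mul_mul_mul_self hP.mul_self hP'.mul_self, Complex.I_mul_I,
      neg_smul_neg, one_smul]

theorem isTableau_onQubit (n : ℕ) :
    IsTableau {P | IsRealPauli n P} (fun a => onQubit a pX) (fun a => onQubit a pZ) where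
  x_mem a := isRealPauli_onQubit a isPauli_pX
  z_mem a := isRealPauli_onQubit a isPauli_pZ
  commute_x a b := by
    rcases eq_or_ne a b with rfl | hab
    exacts [Commute.refl _, commute_onQubit_of_ne hab _ _]
  commute_z a b := by
    rcases eq_or_ne a b with rfl | hab
    exacts [Commute.refl _, commute_onQubit_of_ne hab _ _]
  commute_xz a b hab := commute_onQubit_of_ne hab _ _
  anticommute a := anticommute_pZ_pX.symm.onQubit a

end RealPauli

section CliffordGroup

variable {n : ℕ} {a b : Fin n} {M : Matrix (Fin 2) (Fin 2) ℂ}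
  {Q : Fin n → Matrix (Fin 2) (Fin 2) ℂ}

theorem phaseGateOf_pZ : phaseGateOf pZ = phGate := by
  ext i j
  fin_cases i <;> fin_cases j <;> simp [phaseGateOf, pZ, phGate] <;> ring

theorem hGate_mul_hGate : hGate * hGate = 1 := by
  have hsqrt : (Real.sqrt 2 : ℂ)⁻¹ * (Real.sqrt 2 : ℂ)⁻¹ = 1 / 2 := by
    rw [← mul_inv, ← Complex.ofReal_mul, Real.mul_self_sqrt zero_le_two, Complex.ofReal_ofNat,
      one_div]
  rw [hGate, smul_mul_smul_comm, hsqrt]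
  ext i j
  fin_cases i <;> fin_cases j <;> norm_num [Matrix.mul_apply]

theorem hGate_mul_pZ : hGate * pZ = pX * hGate := by
  rw [hGate, smul_mul_assoc, mul_smul_comm]
  congr 1
  simp [pX, pZ]

theorem hasPhaseGate_onQubit_pZ (a : Fin n) : HasPhaseGate (CliffordGroup n) (onQubit a pZ) where
  mul_self := by rw [onQubit_mul_onQubit, pZ_mul_pZ, onQubit_one]
  mem := by
    rw [← onQubit_phaseGateOf, phaseGateOf_pZ]
    exact Submonoid.subset_closure (Or.inr (Or.inl ⟨a, rfl⟩))

theorem hasPhaseGate_onQubit_pX (a : Fin n) : HasPhaseGate (CliffordGroup n) (onQubit a pX) := by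
  refine (hasPhaseGate_onQubit_pZ a).of_mul_eq_mul (V := onQubit a hGate)
    (Submonoid.subset_closure (Or.inl ⟨a, rfl⟩)) ?_ ?_
  · rw [onQubit_mul_onQubit, hGate_mul_hGate, onQubit_one]
  · rw [onQubit_mul_onQubit, onQubit_mul_onQubit, hGate_mul_pZ]

theorem hasPhaseGate_onQubit_pY (a : Fin n) : HasPhaseGate (CliffordGroup n) (onQubit a pY) := by
  have h := (hasPhaseGate_onQubit_pX a).I_smul_mul (hasPhaseGate_onQubit_pZ a)
    (anticommute_pZ_pX.symm.onQubit a)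
  rwa [onQubit_mul_onQubit, pX_mul_pZ, onQubit_smul, smul_smul, mul_neg, Complex.I_mul_I, neg_neg,
    one_smul] at h

theorem IsPauli.hasPhaseGate_onQubit (hM : IsPauli M) (a : Fin n) :
    HasPhaseGate (CliffordGroup n) (onQubit a M) := by
  rcases hM with rfl | rfl | rfl | rfl
  · rw [onQubit_one]
    exact HasPhaseGate.one
  · exact hasPhaseGate_onQubit_pX a
  · exact hasPhaseGate_onQubit_pY a
  · exact hasPhaseGate_onQubit_pZ a

/-- The updated string is the image of the one-qubit Pauli operator `onQubit a (I • (Q a * M))`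
under conjugation by the phase gate of `kron Q`. -/
theorem HasPhaseGate.kron_update (h : HasPhaseGate (CliffordGroup n) (kron Q))
    (hQa : IsPauli (Q a)) (hM : IsPauli M) (hQa1 : Q a ≠ 1) (hM1 : M ≠ 1) :
    HasPhaseGate (CliffordGroup n) (kron (Function.update Q a M)) := by
  by_cases hMQ : M = Q a
  · rwa [hMQ, Function.update_eq_self]
  have hQM : Anticommute (Q a) M := hQa.anticommute_of_ne hM hQa1 hM1 (Ne.symm hMQ)
  have hR : HasPhaseGate (CliffordGroup n) (onQubit a (Complex.I • (Q a * M))) := by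
    rw [onQubit_smul, ← onQubit_mul_onQubit]
    exact (hQa.hasPhaseGate_onQubit a).I_smul_mul (hM.hasPhaseGate_onQubit a) (hQM.onQubit a)
  have hRQ : Anticommute (Complex.I • (Q a * M)) (Q a) :=
    ((Anticommute.mul_right_of_commute (Commute.refl (Q a)) hQM).smul_right _).symm
  have hRQM : Complex.I • (Complex.I • (Q a * M) * Q a) = M := by
    rw [smul_mul_assoc, smul_smul, Complex.I_mul_I, hQM.eq, neg_mul, mul_assoc, hQa.mul_self,
      mul_one, neg_smul_neg, one_smul]
  have := hR.I_smul_mul h hRQ.onQubit_kron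
  rwa [onQubit_mul_kron, ← kron_update_smul, hRQM] at this

theorem update_add_update_add (hab : a ≠ b) (y : Fin n → Fin 2) :
    Function.update (Function.update y b (y b + y a)) b
      (Function.update y b (y b + y a) b + Function.update y b (y b + y a) a) = y := by
  have hadd : ∀ u v : Fin 2, u + v + v = u := by decide
  rw [Function.update_self, Function.update_of_ne hab, hadd, Function.update_idem,
    Function.update_eq_self]

theorem mul_cnotGate_apply (M : QMat n) (x y : Fin n → Fin 2) :
    (M * cnotGate a b) x y = M x (Function.update y b (y b + y a)) := by
  simp only [cnotGate, Matrix.mul_apply, Matrix.of_apply, mul_ite, mul_one, mul_zero,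
    Finset.sum_ite_eq', Finset.mem_univ, if_true]

theorem cnotGate_mul_self (hab : a ≠ b) : cnotGate a b * cnotGate a b = 1 := by
  ext x y
  rw [mul_cnotGate_apply, cnotGate, Matrix.of_apply, update_add_update_add hab, Matrix.one_apply]

theorem cnotGate_mul_apply (hab : a ≠ b) (M : QMat n) (x y : Fin n → Fin 2) :
    (cnotGate a b * M) x y = M (Function.update x b (x b + x a)) y := by
  have hx (w : Fin n → Fin 2) : x = Function.update w b (w b + w a) ↔
      w = Function.update x b (x b + x a) := by
    constructor <;> rintro rfl <;> exact (update_add_update_add hab _).symm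
  simp only [cnotGate, Matrix.mul_apply, Matrix.of_apply, hx, ite_mul, one_mul, zero_mul,
    Finset.sum_ite_eq', Finset.mem_univ, if_true]

theorem kron_apply_of_ne (hab : a ≠ b) (Q : Fin n → Matrix (Fin 2) (Fin 2) ℂ)
    (x y : Fin n → Fin 2) : kron Q x y = Q a (x a) (y a) * (Q b (x b) (y b) *
      ∏ j ∈ (Finset.univ.erase a).erase b, Q j (x j) (y j)) := by
  rw [kron, Matrix.of_apply, ← Finset.mul_prod_erase _ _ (Finset.mem_univ a),
    ← Finset.mul_prod_erase _ _ (Finset.mem_erase.mpr ⟨hab.symm, Finset.mem_univ b⟩)]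

theorem one_apply_mul_pZ_add_apply (u u' v v' : Fin 2) :
    (1 : Matrix (Fin 2) (Fin 2) ℂ) u u' * pZ (v + u) v' = pZ u u' * pZ v (v' + u') := by
  fin_cases u <;> fin_cases u' <;> fin_cases v <;> fin_cases v' <;> simp [pZ]

theorem cnotGate_mul_kron (hab : a ≠ b) (hQa : Q a = 1) (hQb : Q b = pZ) :
    cnotGate a b * kron Q = kron (Function.update Q a pZ) * cnotGate a b := by
  ext x y
  have hprod : ∏ j ∈ (Finset.univ.erase a).erase b,
        Q j (Function.update x b (x b + x a) j) (y j) =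
      ∏ j ∈ (Finset.univ.erase a).erase b, Function.update Q a pZ j (x j)
        (Function.update y b (y b + y a) j) := by
    refine Finset.prod_congr rfl fun j hj => ?_
    have hjb : j ≠ b := Finset.ne_of_mem_erase hj
    have hja : j ≠ a := Finset.ne_of_mem_erase (Finset.mem_of_mem_erase hj)
    rw [Function.update_of_ne hjb, Function.update_of_ne hjb, Function.update_of_ne hja]
  rw [cnotGate_mul_apply hab, mul_cnotGate_apply, kron_apply_of_ne hab, kron_apply_of_ne hab,
    hprod, ← mul_assoc, ← mul_assoc]
  simp only [Function.update_self, Function.update_of_ne hab, Function.update_of_ne hab.symm, hQa,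
    hQb, one_apply_mul_pZ_add_apply]

/-- The CNOT gate spreads a `Z` from its target `b` to its control `a`; the letters at `a` and `b`
can be changed afterwards. -/
theorem HasPhaseGate.kron_of_update_one (hab : a ≠ b) (hQa : IsPauli (Q a)) (hQb : IsPauli (Q b))
    (hQa1 : Q a ≠ 1) (hQb1 : Q b ≠ 1)
    (h : HasPhaseGate (CliffordGroup n) (kron (Function.update Q a 1))) :
    HasPhaseGate (CliffordGroup n) (kron Q) := by
  set Q' := Function.update (Function.update Q a 1) b pZ with hQ'
  have hQ'a : Q' a = 1 := by rw [hQ', Function.update_of_ne hab, Function.update_self]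
  have hQ'b : Q' b = pZ := Function.update_self ..
  have hZ : HasPhaseGate (CliffordGroup n) (kron Q') := by
    refine h.kron_update ?_ isPauli_pZ ?_ pZ_ne_one <;> rwa [Function.update_of_ne hab.symm]
  have hZZ : HasPhaseGate (CliffordGroup n) (kron (Function.update Q' a pZ)) :=
    hZ.of_mul_eq_mul (Submonoid.subset_closure (Or.inr (Or.inr ⟨a, b, hab, rfl⟩)))
      (cnotGate_mul_self hab) (cnotGate_mul_kron hab hQ'a hQ'b)
  have hQZ : HasPhaseGate (CliffordGroup n) (kron (Function.update Q' a (Q a))) := by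
    have := hZZ.kron_update (a := a) (M := Q a)
    rw [Function.update_self, Function.update_idem] at this
    exact this isPauli_pZ hQa pZ_ne_one hQa1
  have := hQZ.kron_update (a := b) (M := Q b)
  rw [Function.update_of_ne hab.symm, hQ'b, hQ', Function.update_comm hab.symm,
    Function.update_idem, Function.update_idem, Function.update_eq_self,
    Function.update_eq_self] at this
  exact this isPauli_pZ hQb pZ_ne_one hQb1

theorem hasPhaseGate_kron (hQ : ∀ j, IsPauli (Q j)) :
    HasPhaseGate (CliffordGroup n) (kron Q) := by
  suffices ∀ s : Finset (Fin n), ∀ Q : Fin n → Matrix (Fin 2) (Fin 2) ℂ, (∀ j, IsPauli (Q j)) →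
      (∀ j ∉ s, Q j = 1) → HasPhaseGate (CliffordGroup n) (kron Q) from
    this Finset.univ Q hQ fun j hj => absurd (Finset.mem_univ j) hj
  intro s
  induction s using Finset.induction_on with
  | empty =>
    intro Q _ hs
    rw [show Q = 1 from funext fun j => hs j (Finset.notMem_empty j), kron_one]
    exact HasPhaseGate.one
  | insert a s _ ih =>
    intro Q hQ hs
    by_cases hQa : Q a = 1
    · refine ih Q hQ fun j hj => ?_
      rcases eq_or_ne j a with rfl | hja
      · exact hQa
      · exact hs j (by rw [Finset.mem_insert]; tauto)
    by_cases hb : ∃ b, b ≠ a ∧ Q b ≠ 1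
    · obtain ⟨b, hba, hQb⟩ := hb
      refine HasPhaseGate.kron_of_update_one hba.symm (hQ a) (hQ b) hQa hQb (ih _ ?_ ?_)
      · exact (Function.forall_update_iff Q fun _ M => IsPauli M).mpr
          ⟨isPauli_one, fun j _ => hQ j⟩
      · intro j hj
        rcases eq_or_ne j a with rfl | hja
        · exact Function.update_self ..
        · rw [Function.update_of_ne hja]
          exact hs j (by rw [Finset.mem_insert]; tauto)
    · push Not at hb
      rw [kron_eq_onQubit hb]
      exact IsPauli.hasPhaseGate_onQubit (hQ a) a

theorem IsRealPauli.hasPhaseGate {P P' : QMat n} (hP : IsRealPauli n P) (hP' : Anticommute P P')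
    (hPP' : P' * P' = 1) : HasPhaseGate (CliffordGroup n) P := by
  have := IsAddTorsionFree.of_module_rat (QMat n)
  have hnc : ¬Commute P P' := hP'.not_commute hP.mul_self hPP'
  obtain ⟨ε, rfl | rfl, Q, hQ, rfl⟩ := hP
  · rw [one_smul]
    exact hasPhaseGate_kron hQ
  · obtain ⟨a, ha⟩ : ∃ a, Q a ≠ 1 := by
      by_contra! h
      rw [show Q = 1 from funext h, kron_one] at hnc
      exact hnc ((Commute.one_left P').smul_left _)
    obtain ⟨R, hR, hQR⟩ := IsPauli.exists_anticommute (hQ a) ha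
    rw [neg_one_smul]
    exact (hasPhaseGate_kron hQ).neg (hR.hasPhaseGate_onQubit a) hQR.symm.onQubit_kron.symm

theorem coe_ofConjAct_mem_cliffordGroup {g : ConjAct (QMat n)ˣ}
    (hg : g ∈ phaseConjugations {P | IsRealPauli n P}) :
    (↑(ConjAct.ofConjAct g) : QMat n) ∈ CliffordGroup n := by
  suffices phaseConjugations {P | IsRealPauli n P} ≤ (CliffordGroup n).comap
      ((Units.coeHom (QMat n)).comp ConjAct.ofConjAct.toMonoidHom) from this hg
  rw [phaseConjugations, Submonoid.closure_le]
  rintro _ ⟨P, hP, ⟨P', hP', h⟩, hPP, rfl⟩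
  exact (hP.hasPhaseGate h hP'.mul_self).mem

end CliffordGroup

/-- any tableau satisfying the commutativity conditions is realized
by some Clifford unitary: given real-phase Pauli operators `Rx a` (destabilizer rows)
and `Rz a` (stabilizer rows) that pairwise commute except that `Rx a` anticommutes
with `Rz a`, some Clifford unitary `U` maps `X_a ↦ Rx a` and `Z_a ↦ Rz a` by
conjugation. -/
theorem tableau_realized_by_circuit (n : ℕ) (Rx Rz : Fin n → QMat n)
    (hx : ∀ a, IsRealPauli n (Rx a)) (hz : ∀ a, IsRealPauli n (Rz a))
    (hxx : ∀ a b, Rx a * Rx b = Rx b * Rx a)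
    (hzz : ∀ a b, Rz a * Rz b = Rz b * Rz a)
    (hxz : ∀ a b, a ≠ b → Rx a * Rz b = Rz b * Rx a)
    (hanti : ∀ a, Rx a * Rz a = -(Rz a * Rx a)) :
    ∃ U ∈ CliffordGroup n, ∀ a,
      U * onQubit a pX * U⁻¹ = Rx a ∧ U * onQubit a pZ * U⁻¹ = Rz a := by
  have hR : IsTableau {P | IsRealPauli n P} Rx Rz := ⟨hx, hz, hxx, hzz, hxz, hanti⟩
  obtain ⟨g, hg, hgx, hgz⟩ :=
    (isTableau_onQubit n).exists_smul_eq (isPauliSystem_isRealPauli n) hR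
  refine ⟨_, coe_ofConjAct_mem_cliffordGroup hg, fun a => ?_⟩
  rw [← Matrix.coe_units_inv, ← ConjAct.units_smul_def, ← ConjAct.units_smul_def]
  exact ⟨congrFun hgx a, congrFun hgz a⟩
end
end
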